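/- arXiv:2306.14536 — 3 statements merged into one kernel-verified Lean document; each statement's English description precedes it below -/
import Mathlib

section
/- Let $d = 1$, $m \in (0,1)$, and let $\varphi \in C_0^\infty$ be supported in $(1/2, 2)$. Then for every $k \in \mathbb{Z}$ and every $x$ with $|x| < 1$, $\sup_{t \in (-1,1)} \big| \int_{\mathbb{R}} e^{i(x\xi + t|\xi|^m)} \varphi(2^{-k}|\xi|) \, d\xi \big| \lesssim 2^{k/2} |x|^{-1/2} (1 + 2^k |x|^{1/(1-m)})^{-1/2}$. -/
open MeasureTheory Set Complex
open scoped ENNReal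

lemma vdc1 (ψ ψ' ψ'' φ φ' : ℝ → ℝ) (a b L M : ℝ) (hab : a ≤ b) (hb2 : b - a ≤ 2) (hL : 0 < L)
    (h1 : ∀ x ∈ Icc a b, HasDerivAt ψ (ψ' x) x)
    (h2 : ∀ x ∈ Icc a b, HasDerivAt ψ' (ψ'' x) x)
    (h3 : ContinuousOn ψ'' (Icc a b))
    (h4 : ∀ x ∈ Icc a b, 0 ≤ ψ'' x)
    (h5 : ∀ x ∈ Icc a b, L ≤ |ψ' x|)
    (hφ : ∀ x, HasDerivAt φ (φ' x) x) (hφc : Continuous φ')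
    (hM : ∀ x, |φ x| ≤ M) (hM' : ∀ x, |φ' x| ≤ M) :
    ‖∫ x in a..b, Complex.exp (Complex.I * (ψ x : ℂ)) * (φ x : ℂ)‖ ≤ 6 * M / L := by
  have hM0 : 0 ≤ M := (abs_nonneg _).trans (hM 0)
  have hne : ∀ x ∈ Icc a b, ψ' x ≠ 0 := fun x hx h => by
    have := h5 x hx; rw [h, abs_zero] at this; linarith
  have cφ : Continuous φ := continuous_iff_continuousAt.2 fun x => (hφ x).continuousAt
  have cψ : ContinuousOn ψ (Icc a b) := fun x hx => (h1 x hx).continuousAt.continuousWithinAt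
  have cψ' : ContinuousOn ψ' (Icc a b) := fun x hx => (h2 x hx).continuousAt.continuousWithinAt
  have cE : ContinuousOn (fun x => Complex.exp (Complex.I * (ψ x : ℂ))) (Icc a b) := by
    apply Complex.continuous_exp.comp_continuousOn
    exact continuousOn_const.mul (Complex.continuous_ofReal.comp_continuousOn cψ)
  set r : ℝ → ℝ := fun x => φ x / ψ' x with hr
  set r' : ℝ → ℝ := fun x => (φ' x * ψ' x - φ x * ψ'' x) / (ψ' x) ^ 2 with hr'
  have hrd : ∀ x ∈ Icc a b, HasDerivAt r (r' x) x := fun x hx =>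
    (hφ x).div (h2 x hx) (hne x hx)
  have cr' : ContinuousOn r' (Icc a b) := by
    apply ContinuousOn.div
    · exact (hφc.continuousOn.mul cψ').sub (cφ.continuousOn.mul h3)
    · exact cψ'.pow 2
    · intro x hx; exact pow_ne_zero _ (hne x hx)
  have normE : ∀ y : ℝ, ‖Complex.exp (Complex.I * (y : ℂ))‖ = 1 := fun y => by
    rw [mul_comm]; exact Complex.norm_exp_ofReal_mul_I y
  set F : ℝ → ℂ := fun x => -Complex.I * (Complex.exp (Complex.I * (ψ x : ℂ)) * (r x : ℂ)) with hF
  set f : ℝ → ℂ := fun x => Complex.exp (Complex.I * (ψ x : ℂ)) * (φ x : ℂ) with hf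
  set G : ℝ → ℂ := fun x => -Complex.I * (Complex.exp (Complex.I * (ψ x : ℂ)) * (r' x : ℂ)) with hG
  have hFd : ∀ x ∈ Icc a b, HasDerivAt F (f x + G x) x := by
    intro x hx
    have e1 := ((h1 x hx).ofReal_comp.const_mul Complex.I).cexp
    have e2 := (e1.mul (hrd x hx).ofReal_comp).const_mul (-Complex.I)
    refine e2.congr_deriv ?_
    have hn : (ψ' x : ℂ) ≠ 0 := by exact_mod_cast hne x hx
    have hrr : (φ x : ℂ) = (ψ' x : ℂ) * (r x : ℂ) := by
      simp only [hr]; push_cast; field_simp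
    simp only [hf, hG]
    rw [hrr]
    linear_combination (-(Complex.exp (Complex.I * (ψ x : ℂ)) * ψ' x * r x)) * Complex.I_sq
  have cf : ContinuousOn f (Icc a b) :=
    cE.mul (Complex.continuous_ofReal.comp_continuousOn cφ.continuousOn)
  have cG : ContinuousOn G (Icc a b) :=
    continuousOn_const.mul (cE.mul (Complex.continuous_ofReal.comp_continuousOn cr'))
  have iif : IntervalIntegrable f volume a b := by
    apply ContinuousOn.intervalIntegrable; rwa [uIcc_of_le hab]
  have iiG : IntervalIntegrable G volume a b := by
    apply ContinuousOn.intervalIntegrable; rwa [uIcc_of_le hab]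
  have key := intervalIntegral.integral_eq_sub_of_hasDerivAt (f := F) (a := a) (b := b)
    (f' := fun x => f x + G x) (by rwa [uIcc_of_le hab]) (iif.add iiG)
  rw [intervalIntegral.integral_add iif iiG] at key
  have e : ∫ x in a..b, f x = F b - F a - ∫ x in a..b, G x := by rw [← key]; ring
  have hFn : ∀ x ∈ Icc a b, ‖F x‖ ≤ M / L := by
    intro x hx
    simp only [hF, norm_mul, norm_neg, Complex.norm_I, normE, one_mul, Complex.norm_real, hr,
      Real.norm_eq_abs, abs_div]
    exact div_le_div₀ hM0 (hM x) hL (h5 x hx)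
  have cdom : ContinuousOn (fun x => ψ'' x / (ψ' x)^2) (Icc a b) := by
    apply ContinuousOn.div h3 (cψ'.pow 2)
    intro x hx; exact pow_ne_zero _ (hne x hx)
  have iid : IntervalIntegrable (fun x => ψ'' x / (ψ' x)^2) volume a b := by
    apply ContinuousOn.intervalIntegrable; rwa [uIcc_of_le hab]
  have hdomI : ∫ x in a..b, ψ'' x / (ψ' x)^2 = (-(ψ' b)⁻¹) - (-(ψ' a)⁻¹) := by
    apply intervalIntegral.integral_eq_sub_of_hasDerivAt (f := fun x => -(ψ' x)⁻¹) _ iid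
    rw [uIcc_of_le hab]
    intro x hx
    exact ((h2 x hx).inv (hne x hx)).neg.congr_deriv (by ring)
  have hinv : ∀ x ∈ Icc a b, |(ψ' x)⁻¹| ≤ 1 / L := by
    intro x hx
    rw [abs_inv, ← one_div]
    exact one_div_le_one_div_of_le hL (h5 x hx)
  have hGI : ‖∫ x in a..b, G x‖ ≤ ∫ x in a..b, (M / L + M * (ψ'' x / (ψ' x)^2)) := by
    apply intervalIntegral.norm_integral_le_of_norm_le hab
    · refine Filter.Eventually.of_forall fun x hx => ?_
      have hx : x ∈ Icc a b := ⟨hx.1.le, hx.2⟩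
      simp only [hG, norm_mul, norm_neg, Complex.norm_I, normE, one_mul, Complex.norm_real, hr',
        Real.norm_eq_abs]
      have : (φ' x * ψ' x - φ x * ψ'' x) / (ψ' x) ^ 2
          = φ' x / ψ' x - φ x * (ψ'' x / (ψ' x)^2) := by
        have := hne x hx
        field_simp
      rw [this]
      refine (abs_sub _ _).trans (add_le_add ?_ ?_)
      · rw [abs_div]; exact div_le_div₀ hM0 (hM' x) hL (h5 x hx)
      · have : 0 ≤ ψ'' x / (ψ' x)^2 := div_nonneg (h4 x hx) (sq_nonneg _)
        rw [abs_mul, abs_of_nonneg this]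
        exact mul_le_mul_of_nonneg_right (hM x) this
    · exact (intervalIntegrable_const).add (iid.const_mul M)
  rw [intervalIntegral.integral_add intervalIntegrable_const (iid.const_mul M),
    intervalIntegral.integral_const,
    intervalIntegral.integral_const_mul (r := M) (f := fun x => ψ'' x / (ψ' x)^2), hdomI] at hGI
  have ha : a ∈ Icc a b := ⟨le_rfl, hab⟩
  have hb : b ∈ Icc a b := ⟨hab, le_rfl⟩
  have t1 : -(ψ' b)⁻¹ - -(ψ' a)⁻¹ ≤ 2 / L := by
    have := abs_le.1 (hinv a ha); have := abs_le.1 (hinv b hb)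
    have : 2 / L = 1 / L + 1 / L := by ring
    linarith
  have t2 : M * (-(ψ' b)⁻¹ - -(ψ' a)⁻¹) ≤ M * (2 / L) := mul_le_mul_of_nonneg_left t1 hM0
  have t3 : (b - a) • (M / L) ≤ 2 * (M / L) := by
    rw [smul_eq_mul]; exact mul_le_mul_of_nonneg_right hb2 (by positivity)
  have t4 : 6 * M / L = M / L + M / L + (2 * (M / L) + M * (2 / L)) := by ring
  rw [e, t4]
  refine (norm_sub_le _ _).trans (add_le_add ((norm_sub_le _ _).trans
    (add_le_add (hFn b hb) (hFn a ha))) ?_)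
  linarith

lemma vdc2 (ψ ψ' ψ'' φ φ' : ℝ → ℝ) (a b L M : ℝ) (hab : a ≤ b) (hb2 : b - a ≤ 2) (hL : 0 < L)
    (h1 : ∀ x ∈ Icc a b, HasDerivAt ψ (ψ' x) x)
    (h2 : ∀ x ∈ Icc a b, HasDerivAt ψ' (ψ'' x) x)
    (h3 : ContinuousOn ψ'' (Icc a b))
    (h4 : ∀ x ∈ Icc a b, L ≤ ψ'' x)
    (hφ : ∀ x, HasDerivAt φ (φ' x) x) (hφc : Continuous φ')
    (hM : ∀ x, |φ x| ≤ M) (hM' : ∀ x, |φ' x| ≤ M) :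
    ‖∫ x in a..b, Complex.exp (Complex.I * (ψ x : ℂ)) * (φ x : ℂ)‖ ≤ 14 * M / √L := by
  have hM0 : 0 ≤ M := (abs_nonneg _).trans (hM 0)
  have cφ : Continuous φ := continuous_iff_continuousAt.2 fun x => (hφ x).continuousAt
  have cψ : ContinuousOn ψ (Icc a b) := fun x hx => (h1 x hx).continuousAt.continuousWithinAt
  have cψ' : ContinuousOn ψ' (Icc a b) := fun x hx => (h2 x hx).continuousAt.continuousWithinAt
  have cE : ContinuousOn (fun x => Complex.exp (Complex.I * (ψ x : ℂ))) (Icc a b) := by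
    apply Complex.continuous_exp.comp_continuousOn
    exact continuousOn_const.mul (Complex.continuous_ofReal.comp_continuousOn cψ)
  have normE : ∀ y : ℝ, ‖Complex.exp (Complex.I * (y : ℂ))‖ = 1 := fun y => by
    rw [mul_comm]; exact Complex.norm_exp_ofReal_mul_I y
  set f : ℝ → ℂ := fun x => Complex.exp (Complex.I * (ψ x : ℂ)) * (φ x : ℂ) with hf
  have cf : ContinuousOn f (Icc a b) :=
    cE.mul (Complex.continuous_ofReal.comp_continuousOn cφ.continuousOn)
  -- growth
  have grow : ∀ x ∈ Icc a b, ∀ y ∈ Icc a b, x ≤ y → L * (y - x) ≤ ψ' y - ψ' x := by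
    apply (convex_Icc a b).mul_sub_le_image_sub_of_le_deriv cψ'
    · intro x hx
      exact (h2 x (interior_subset hx)).differentiableAt.differentiableWithinAt
    · intro x hx
      rw [(h2 x (interior_subset hx)).deriv]; exact h4 x (interior_subset hx)
  have ha : a ∈ Icc a b := ⟨le_rfl, hab⟩
  have hb : b ∈ Icc a b := ⟨hab, le_rfl⟩
  obtain ⟨c, hc, hcl, hcr⟩ : ∃ c ∈ Icc a b, (∀ x ∈ Icc a b, x < c → L * (c - x) ≤ |ψ' x|) ∧
      (∀ x ∈ Icc a b, c < x → L * (x - c) ≤ |ψ' x|) := by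
    by_cases h0 : 0 ≤ ψ' a
    · refine ⟨a, ha, fun x hx h => absurd h (not_lt.2 hx.1), fun x hx h => ?_⟩
      have := grow a ha x hx h.le
      exact le_trans (by linarith) (le_abs_self _)
    by_cases h0' : ψ' b ≤ 0
    · refine ⟨b, hb, fun x hx h => ?_, fun x hx h => absurd h (not_lt.2 hx.2)⟩
      have := grow x hx b hb h.le
      exact le_trans (by linarith) (neg_le_abs _)
    obtain ⟨c, hc, hc0⟩ := intermediate_value_Icc hab cψ'
      (show (0:ℝ) ∈ Icc _ _ from ⟨(not_le.1 h0).le, (not_le.1 h0').le⟩)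
    refine ⟨c, hc, fun x hx h => ?_, fun x hx h => ?_⟩
    · have := grow x hx c hc h.le
      exact le_trans (by linarith) (neg_le_abs _)
    · have := grow c hc x hx h.le
      exact le_trans (by linarith) (le_abs_self _)
  have hs : 0 < √L := Real.sqrt_pos.2 hL
  have hLs : L = √L * √L := (Real.mul_self_sqrt hL.le).symm
  set δ : ℝ := 1 / √L with hδ
  have hδ0 : 0 < δ := by positivity
  have hLδ : L * δ = √L := by rw [hδ]; nth_rewrite 1 [hLs]; field_simp
  set p := max a (c - δ) with hp
  set q := min b (c + δ) with hq
  have hap : a ≤ p := le_max_left _ _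
  have hpc : p ≤ c := max_le hc.1 (by linarith)
  have hcq : c ≤ q := le_min hc.2 (by linarith)
  have hqb : q ≤ b := min_le_left _ _
  have sub : ∀ u v, a ≤ u → u ≤ v → v ≤ b → IntervalIntegrable f volume u v := by
    intro u v hu huv hv
    apply ContinuousOn.intervalIntegrable
    rw [uIcc_of_le huv]
    exact cf.mono (Icc_subset_Icc hu hv)
  have i1 := sub a p le_rfl hap (hpc.trans hc.2)
  have i2 := sub p q hap (hpc.trans hcq) hqb
  have i3 := sub q b (hc.1.trans hcq) hqb le_rfl
  rw [← intervalIntegral.integral_add_adjacent_intervals (i1.trans i2) i3,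
    ← intervalIntegral.integral_add_adjacent_intervals i1 i2]
  have b1 : ‖∫ x in a..p, f x‖ ≤ 6 * M / √L := by
    rcases le_total a (c - δ) with h | h
    · have hpe : p = c - δ := max_eq_right h
      have s : Icc a p ⊆ Icc a b := Icc_subset_Icc le_rfl (hpc.trans hc.2)
      refine vdc1 ψ ψ' ψ'' φ φ' a p (√L) M hap (by linarith [hc.2]) hs (fun x hx => h1 x (s hx))
        (fun x hx => h2 x (s hx)) (h3.mono s) (fun x hx => hL.le.trans (h4 x (s hx))) ?_ hφ hφc hM hM'
      intro x hx
      have hxc : x ≤ c - δ := hpe ▸ hx.2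
      refine le_trans ?_ (hcl x (s hx) (by linarith))
      rw [← hLδ]; exact mul_le_mul_of_nonneg_left (by linarith) hL.le
    · have hpe : p = a := max_eq_left h
      rw [hpe, intervalIntegral.integral_same, norm_zero]; positivity
  have b3 : ‖∫ x in q..b, f x‖ ≤ 6 * M / √L := by
    rcases le_total b (c + δ) with h | h
    · have hpe : q = b := min_eq_left h
      rw [hpe, intervalIntegral.integral_same, norm_zero]; positivity
    · have hpe : q = c + δ := min_eq_right h
      have s : Icc q b ⊆ Icc a b := Icc_subset_Icc (hc.1.trans hcq) le_rfl
      refine vdc1 ψ ψ' ψ'' φ φ' q b (√L) M hqb (by linarith [hc.1]) hs (fun x hx => h1 x (s hx))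
        (fun x hx => h2 x (s hx)) (h3.mono s) (fun x hx => hL.le.trans (h4 x (s hx))) ?_ hφ hφc hM hM'
      intro x hx
      have hxc : c + δ ≤ x := hpe ▸ hx.1
      refine le_trans ?_ (hcr x (s hx) (by linarith))
      rw [← hLδ]; exact mul_le_mul_of_nonneg_left (by linarith) hL.le
  have b2 : ‖∫ x in p..q, f x‖ ≤ 2 * M / √L := by
    have := intervalIntegral.norm_integral_le_of_norm_le_const (a := p) (b := q) (f := f) (C := M) (by
      intro x _
      simp only [hf, norm_mul, normE, one_mul, Complex.norm_real, Real.norm_eq_abs]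
      exact hM x)
    refine this.trans ?_
    rw [abs_of_nonneg (by linarith)]
    have h1 : c - δ ≤ p := le_max_right _ _
    have h2 : q ≤ c + δ := min_le_right _ _
    have : q - p ≤ 2 * δ := by linarith
    calc M * (q - p) ≤ M * (2 * δ) := mul_le_mul_of_nonneg_left this hM0
      _ = _ := by rw [hδ]; ring
  have : 14 * M / √L = 6 * M / √L + 2 * M / √L + 6 * M / √L := by ring
  rw [this]
  exact (norm_add_le _ _).trans (add_le_add ((norm_add_le _ _).trans (add_le_add b1 b2)) b3)


lemma core_neg (m : ℝ) (hm0 : 0 < m) (hm1 : m < 1) (φ φ' : ℝ → ℝ) (M A B : ℝ)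
    (hφ : ∀ x, HasDerivAt φ (φ' x) x) (hφc : Continuous φ')
    (hM : ∀ x, |φ x| ≤ M) (hM' : ∀ x, |φ' x| ≤ M) (hB : B ≤ 0) :
    (4 * |B| ≤ |A| → A ≠ 0 →
      ‖∫ y in (1/2:ℝ)..2, Complex.exp (Complex.I * ((A * y + B * y ^ m : ℝ) : ℂ)) * (φ y : ℂ)‖
        ≤ 12 * M / |A|) ∧
    (B ≠ 0 →
      ‖∫ y in (1/2:ℝ)..2, Complex.exp (Complex.I * ((A * y + B * y ^ m : ℝ) : ℂ)) * (φ y : ℂ)‖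
        ≤ 14 * M / √(|B| * (m * (1 - m) / 4))) := by
  have h1 : ∀ x ∈ Icc (1/2:ℝ) 2, HasDerivAt (fun y : ℝ => A * y + B * y ^ m)
      (A + B * (m * x ^ (m - 1))) x := by
    intro x hx
    have hx0 : x ≠ 0 := by linarith [hx.1]
    have := ((hasDerivAt_id x).const_mul A).add
      ((Real.hasDerivAt_rpow_const (p := m) (Or.inl hx0)).const_mul B)
    exact this.congr_deriv (by ring)
  have h2 : ∀ x ∈ Icc (1/2:ℝ) 2, HasDerivAt (fun y : ℝ => A + B * (m * y ^ (m - 1)))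
      (-B * (m * (1 - m)) * x ^ (m - 2)) x := by
    intro x hx
    have hx0 : x ≠ 0 := by linarith [hx.1]
    have := (((Real.hasDerivAt_rpow_const (p := m - 1) (Or.inl hx0)).const_mul m).const_mul
      B).const_add A
    refine this.congr_deriv ?_
    rw [show m - 1 - 1 = m - 2 by ring]; ring
  have h3 : ContinuousOn (fun x : ℝ => -B * (m * (1 - m)) * x ^ (m - 2)) (Icc (1/2:ℝ) 2) := by
    apply continuousOn_const.mul
    apply continuousOn_id.rpow_const
    intro x hx
    left
    have := hx.1
    simp only [id]; linarith
  have hpos : 0 < m * (1 - m) := mul_pos hm0 (by linarith)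
  have h4 : ∀ x ∈ Icc (1/2:ℝ) 2, |B| * (m * (1 - m) / 4) ≤ -B * (m * (1 - m)) * x ^ (m - 2) := by
    intro x hx
    have hx0 : 0 < x := by linarith [hx.1]
    have e1 : (1/4 : ℝ) ≤ x ^ (m - 2) := by
      calc (1/4 : ℝ) = 2 ^ (-2 : ℝ) := by
            rw [Real.rpow_neg (by norm_num)]; norm_num
        _ ≤ 2 ^ (m - 2) := Real.rpow_le_rpow_of_exponent_le (by norm_num) (by linarith)
        _ ≤ x ^ (m - 2) := Real.rpow_le_rpow_of_nonpos hx0 hx.2 (by linarith)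
    rw [abs_of_nonpos hB]
    calc -B * (m * (1 - m) / 4) = (-B * (m * (1 - m))) * (1/4) := by ring
      _ ≤ _ := mul_le_mul_of_nonneg_left e1 (mul_nonneg (by linarith) hpos.le)
  constructor
  · intro hAB hA
    have hA' : 0 < |A| := abs_pos.2 hA
    have := vdc1 (fun y : ℝ => A * y + B * y ^ m) _ _ φ φ' (1/2) 2 (|A|/2) M (by norm_num)
      (by norm_num) (by positivity) h1 h2 h3
      (fun x hx => le_trans (by positivity) (h4 x hx)) ?_ hφ hφc hM hM'
    · refine this.trans (le_of_eq ?_)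
      field_simp; ring
    · intro x hx
      have hx0 : 0 < x := by linarith [hx.1]
      have e1 : x ^ (m - 1) ≤ 2 := by
        calc x ^ (m - 1) ≤ (1/2 : ℝ) ^ (m - 1) :=
              Real.rpow_le_rpow_of_nonpos (by norm_num) hx.1 (by linarith)
          _ ≤ (1/2 : ℝ) ^ (-1 : ℝ) :=
              Real.rpow_le_rpow_of_exponent_ge (by norm_num) (by norm_num) (by linarith)
          _ = 2 := by rw [Real.rpow_neg_one]; norm_num
      have e0 : 0 < x ^ (m - 1) := Real.rpow_pos_of_pos hx0 _
      have e2 : |B * (m * x ^ (m - 1))| ≤ |A| / 2 := by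
        rw [abs_mul, abs_of_pos (mul_pos hm0 e0)]
        have : m * x ^ (m - 1) ≤ 1 * 2 := mul_le_mul hm1.le e1 e0.le (by norm_num)
        calc |B| * (m * x ^ (m - 1)) ≤ |B| * (1 * 2) :=
              mul_le_mul_of_nonneg_left this (abs_nonneg _)
          _ ≤ |A| / 2 := by linarith
      have := abs_sub_abs_le_abs_sub A (-(B * (m * x ^ (m - 1))))
      rw [abs_neg, sub_neg_eq_add] at this
      linarith
  · intro hB0
    have : 0 < |B| := abs_pos.2 hB0
    exact vdc2 (fun y : ℝ => A * y + B * y ^ m) _ _ φ φ' (1/2) 2 _ M (by norm_num)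
      (by norm_num) (by positivity) h1 h2 h3 h4 hφ hφc hM hM'

lemma core_conj (m : ℝ) (φ : ℝ → ℝ) (A B : ℝ) :
    ‖∫ y in (1/2:ℝ)..2, Complex.exp (Complex.I * ((A * y + B * y ^ m : ℝ) : ℂ)) * (φ y : ℂ)‖ =
    ‖∫ y in (1/2:ℝ)..2, Complex.exp (Complex.I * (((-A) * y + (-B) * y ^ m : ℝ) : ℂ)) * (φ y : ℂ)‖ := by
  rw [intervalIntegral.integral_of_le (by norm_num), intervalIntegral.integral_of_le (by norm_num),
    ← RCLike.norm_conj, ← integral_conj]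
  congr 2
  ext y
  rw [map_mul, ← Complex.exp_conj, map_mul, Complex.conj_I, Complex.conj_ofReal, Complex.conj_ofReal]
  congr 2
  push_cast
  ring

lemma core_all (m : ℝ) (hm0 : 0 < m) (hm1 : m < 1) (φ φ' : ℝ → ℝ) (M A B S S₀ : ℝ)
    (hφ : ∀ x, HasDerivAt φ (φ' x) x) (hφc : Continuous φ')
    (hM : ∀ x, |φ x| ≤ M) (hM' : ∀ x, |φ' x| ≤ M) (hA : A ≠ 0) (hS : 0 ≤ S) (hSA : S ≤ |A|)
    (hS₀ : |A| < 4 * |B| → S ≤ S₀) :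
    ‖∫ y in (1/2:ℝ)..2, Complex.exp (Complex.I * ((A * y + B * y ^ m : ℝ) : ℂ)) * (φ y : ℂ)‖
        * √(|A| * (1 + S)) ≤ 24 * M + 14 * M * √((1 + S₀) * (4 / (m * (1 - m) / 4))) := by
  have hM0 : 0 ≤ M := (abs_nonneg _).trans (hM 0)
  have hA' : 0 < |A| := abs_pos.2 hA
  have hpos : 0 < m * (1 - m) := mul_pos hm0 (by linarith)
  have triv : ‖∫ y in (1/2:ℝ)..2, Complex.exp (Complex.I * ((A * y + B * y ^ m : ℝ) : ℂ)) * (φ y : ℂ)‖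
      ≤ 2 * M := by
    have := intervalIntegral.norm_integral_le_of_norm_le_const (a := (1/2:ℝ)) (b := 2)
      (f := fun y : ℝ => Complex.exp (Complex.I * ((A * y + B * y ^ m : ℝ) : ℂ)) * (φ y : ℂ))
      (C := M) (by
      intro x _
      rw [norm_mul, mul_comm Complex.I, Complex.norm_exp_ofReal_mul_I, one_mul, Complex.norm_real]
      exact hM x)
    refine this.trans ?_
    rw [abs_of_nonneg (by norm_num)]
    linarith
  have main : (4 * |B| ≤ |A| →
      ‖∫ y in (1/2:ℝ)..2, Complex.exp (Complex.I * ((A * y + B * y ^ m : ℝ) : ℂ)) * (φ y : ℂ)‖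
        ≤ 12 * M / |A|) ∧
    (B ≠ 0 →
      ‖∫ y in (1/2:ℝ)..2, Complex.exp (Complex.I * ((A * y + B * y ^ m : ℝ) : ℂ)) * (φ y : ℂ)‖
        ≤ 14 * M / √(|B| * (m * (1 - m) / 4))) := by
    rcases le_total B 0 with h | h
    · obtain ⟨p, q⟩ := core_neg m hm0 hm1 φ φ' M A B hφ hφc hM hM' h
      exact ⟨fun u => p u hA, q⟩
    · obtain ⟨p, q⟩ := core_neg m hm0 hm1 φ φ' M (-A) (-B) hφ hφc hM hM' (by linarith)
      rw [core_conj]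
      rw [abs_neg, abs_neg] at p
      rw [abs_neg] at q
      exact ⟨fun u => p u (neg_ne_zero.2 hA), fun u => q (neg_ne_zero.2 u)⟩
  set J := ‖∫ y in (1/2:ℝ)..2, Complex.exp (Complex.I * ((A * y + B * y ^ m : ℝ) : ℂ)) * (φ y : ℂ)‖
  have hJ : 0 ≤ J := norm_nonneg _
  clear_value J
  rcases le_or_gt (4 * |B|) |A| with h | h
  · have hJ1 := main.1 h
    have : J * √(|A| * (1 + S)) ≤ 24 * M := by
      rcases le_total |A| 1 with h1 | h1
      · have : √(|A| * (1 + S)) ≤ 2 := by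
          apply Real.sqrt_le_iff.2 ⟨by norm_num, ?_⟩
          nlinarith
        calc J * √(|A| * (1 + S)) ≤ (2 * M) * 2 :=
              mul_le_mul triv this (Real.sqrt_nonneg _) (by positivity)
          _ ≤ 24 * M := by linarith
      · have : √(|A| * (1 + S)) ≤ 2 * |A| := by
          apply Real.sqrt_le_iff.2 ⟨by positivity, ?_⟩
          nlinarith
        calc J * √(|A| * (1 + S)) ≤ (12 * M / |A|) * (2 * |A|) :=
              mul_le_mul hJ1 this (Real.sqrt_nonneg _) (by positivity)
          _ = 24 * M := by field_simp; ring
    have : 0 ≤ 14 * M * √((1 + S₀) * (4 / (m * (1 - m) / 4))) := by positivity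
    linarith
  · have hB : 0 < |B| := by linarith
    have hJ2 := main.2 (abs_pos.1 hB)
    have hS1 := hS₀ h
    set c := m * (1 - m) / 4 with hc
    have hc0 : 0 < c := by positivity
    have : √(|A| * (1 + S)) ≤ √(|B| * c) * √((1 + S₀) * (4 / c)) := by
      rw [← Real.sqrt_mul (by positivity)]
      apply Real.sqrt_le_sqrt
      calc |A| * (1 + S) ≤ (4 * |B|) * (1 + S₀) :=
            mul_le_mul h.le (by linarith) (by linarith) (by positivity)
        _ = _ := by field_simp
    have hs : 0 < √(|B| * c) := Real.sqrt_pos.2 (by positivity)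
    have : J * √(|A| * (1 + S)) ≤ 14 * M * √((1 + S₀) * (4 / c)) := by
      calc J * √(|A| * (1 + S)) ≤ (14 * M / √(|B| * c)) * (√(|B| * c) * √((1 + S₀) * (4 / c))) :=
              mul_le_mul hJ2 this (Real.sqrt_nonneg _) (by positivity)
          _ = _ := by field_simp
    linarith

lemma reduce (m : ℝ) (hm0 : 0 < m) (φ : ℝ → ℝ) (hφ : Continuous φ)
    (hφsupp : Function.support φ ⊆ Set.Ioo (1/2 : ℝ) 2) (N x t : ℝ) (hN : 0 < N) :
    ∫ ξ : ℝ, Complex.exp (Complex.I * ((x * ξ + t * |ξ| ^ m : ℝ) : ℂ)) * (φ (N⁻¹ * |ξ|) : ℂ) =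
    (N : ℂ) * ((∫ y in (1/2:ℝ)..2, Complex.exp (Complex.I *
        (((-(x * N)) * y + (t * N ^ m) * y ^ m : ℝ) : ℂ)) * (φ y : ℂ)) +
      ∫ y in (1/2:ℝ)..2, Complex.exp (Complex.I *
        (((x * N) * y + (t * N ^ m) * y ^ m : ℝ) : ℂ)) * (φ y : ℂ)) := by
  have hz : ∀ y, y ≤ 1/2 ∨ 2 ≤ y → φ y = 0 := by
    intro y hy
    by_contra h
    have := hφsupp h
    rcases hy with hy | hy
    · exact absurd this.1 (not_lt.2 hy)
    · exact absurd this.2 (not_lt.2 hy)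
  set g : ℝ → ℂ := fun ξ =>
    Complex.exp (Complex.I * ((x * ξ + t * |ξ| ^ m : ℝ) : ℂ)) * (φ (N⁻¹ * |ξ|) : ℂ) with hg
  set f : ℝ → ℂ := fun η =>
    Complex.exp (Complex.I * (((x * N) * η + (t * N ^ m) * |η| ^ m : ℝ) : ℂ)) * (φ |η| : ℂ) with hf
  have hgf : ∀ η, g (N * η) = f η := by
    intro η
    simp only [hg, hf]
    rw [abs_mul, abs_of_pos hN, Real.mul_rpow hN.le (abs_nonneg _), inv_mul_cancel_left₀ hN.ne']
    congr 4
    ring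
  have e1 : ∫ ξ, g ξ = (N : ℂ) * ∫ η, f η := by
    have := Measure.integral_comp_mul_left g N
    simp only [hgf] at this
    rw [this, abs_of_pos (inv_pos.2 hN), Complex.real_smul]
    push_cast
    rw [mul_inv_cancel_left₀ (by exact_mod_cast hN.ne')]
  rw [e1]
  congr 1
  have cf : Continuous f := by
    have : Continuous fun η : ℝ => |η| ^ m :=
      (continuous_abs).rpow_const fun _ => Or.inr hm0.le
    simp only [hf]
    fun_prop
  have hfs : Function.support f ⊆ Ioc (-2) 2 := by
    intro y hy
    by_contra h
    apply hy
    simp only [hf]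
    rw [hz |y|, Complex.ofReal_zero, mul_zero]
    right
    by_contra h'
    have := abs_lt.1 (not_le.1 h')
    exact h ⟨this.1, this.2.le⟩
  rw [← intervalIntegral.integral_eq_integral_of_support_subset hfs]
  have ii : ∀ a b, IntervalIntegrable f volume a b := fun a b => cf.intervalIntegrable a b
  rw [← intervalIntegral.integral_add_adjacent_intervals (ii (-2) (-(1/2))) (ii _ 2),
    ← intervalIntegral.integral_add_adjacent_intervals (ii (-(1/2)) (1/2)) (ii _ 2)]
  have z : ∫ y in (-(1/2):ℝ)..(1/2), f y = 0 := by
    rw [intervalIntegral.integral_congr (g := fun _ => (0:ℂ))]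
    · simp
    · intro y hy
      rw [uIcc_of_le (by norm_num)] at hy
      simp only [hf]
      rw [hz |y| (Or.inl (abs_le.2 hy)), Complex.ofReal_zero, mul_zero]
  rw [z, zero_add, ← intervalIntegral.integral_comp_neg]
  congr 1
  · apply intervalIntegral.integral_congr
    intro y hy
    rw [uIcc_of_le (by norm_num)] at hy
    have hy0 : 0 ≤ y := by linarith [hy.1]
    simp only [hf]
    rw [abs_neg, abs_of_nonneg hy0]
    congr 4
    ring
  · apply intervalIntegral.integral_congr
    intro y hy
    rw [uIcc_of_le (by norm_num)] at hy
    have hy0 : 0 ≤ y := by linarith [hy.1]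
    simp only [hf]
    rw [abs_of_nonneg hy0]

/-- For `d = 1`, `m ∈ (0,1)`, and a bump `φ` supported in `(1/2,2)`,
the refined local-in-time dispersive estimate
`sup_{t ∈ (-1,1)} |∫ e^{i(xξ + t|ξ|^m)} φ(2^{-k}|ξ|) dξ|
  ≲ 2^{k/2} |x|^{-1/2} (1 + 2^k |x|^{1/(1-m)})^{-1/2}`
holds for every `k ∈ ℤ` and every `x` with `0 < |x| < 1`. -/
theorem statement4 (m : ℝ) (hm0 : 0 < m) (hm1 : m < 1)
    (φ : ℝ → ℝ) (hφ : ContDiff ℝ (⊤ : ℕ∞) φ) (hφsupp : Function.support φ ⊆ Set.Ioo (1/2 : ℝ) 2) :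
    ∃ C : ℝ, 0 < C ∧
      ∀ (k : ℤ) (x : ℝ), |x| < 1 → x ≠ 0 →
        ∀ t : ℝ, t ∈ Set.Ioo (-1 : ℝ) 1 →
          ‖∫ ξ : ℝ, Complex.exp (Complex.I * ((x * ξ + t * |ξ| ^ m : ℝ) : ℂ)) *
              (φ ((2 : ℝ) ^ (-k) * |ξ|) : ℂ)‖ ≤
            C * (2 : ℝ) ^ ((k : ℝ) / 2) * |x| ^ (-(1 : ℝ) / 2) *
              (1 + (2 : ℝ) ^ (k : ℤ) * |x| ^ ((1 : ℝ) / (1 - m))) ^ (-(1 : ℝ) / 2) := by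
  have hd : ∀ x, HasDerivAt φ (deriv φ x) x := fun x =>
    (hφ.differentiable (by simp)).differentiableAt.hasDerivAt
  have hdc : Continuous (deriv φ) := hφ.continuous_deriv (by exact_mod_cast le_top)
  have hcs : HasCompactSupport φ := HasCompactSupport.intro (isCompact_Icc (a := (1/2:ℝ)) (b := 2))
    (fun x hx => by
      by_contra h
      exact hx (Ioo_subset_Icc_self (hφsupp h)))
  obtain ⟨M₁, hM₁⟩ := hcs.exists_bound_of_continuous hφ.continuous
  obtain ⟨M₂, hM₂⟩ := hcs.deriv.exists_bound_of_continuous hdc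
  set M := max M₁ M₂ with hMdef
  have hM : ∀ x, |φ x| ≤ M := fun x => (hM₁ x).trans (le_max_left _ _)
  have hM' : ∀ x, |deriv φ x| ≤ M := fun x => (hM₂ x).trans (le_max_right _ _)
  have hM0 : 0 ≤ M := (abs_nonneg _).trans (hM 0)
  set K := 24 * M + 14 * M * √((1 + (4:ℝ) ^ (1 / (1 - m))) * (4 / (m * (1 - m) / 4))) with hK
  have hK0 : 0 ≤ K := by positivity
  refine ⟨2 * K + 1, by positivity, ?_⟩
  intro k x hx hx0 t ht
  have h1m : 0 < 1 - m := by linarith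
  have hNz : (2:ℝ) ^ (-k) = ((2:ℝ) ^ k)⁻¹ := zpow_neg _ _
  have hNr : (2:ℝ) ^ ((k:ℝ) / 2) = √((2:ℝ) ^ k) := by
    rw [Real.sqrt_eq_rpow, ← Real.rpow_intCast, ← Real.rpow_mul (by norm_num)]
    congr 1; ring
  rw [hNz, hNr]
  have hN : (0:ℝ) < (2:ℝ) ^ k := by positivity
  set N : ℝ := (2:ℝ) ^ k with hNdef
  clear_value N
  have hxp : 0 < |x| := abs_pos.2 hx0
  set S := N * |x| ^ ((1:ℝ) / (1 - m)) with hS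
  have hS0 : 0 ≤ S := by positivity
  have hSle : S ≤ |x| * N := by
    rw [mul_comm |x|]
    apply mul_le_mul_of_nonneg_left _ hN.le
    calc |x| ^ ((1:ℝ) / (1 - m)) ≤ |x| ^ (1:ℝ) :=
          Real.rpow_le_rpow_of_exponent_ge hxp hx.le (by
            rw [le_div_iff₀ h1m]; linarith)
      _ = |x| := Real.rpow_one _
  have habs : |x * N| = |x| * N := by rw [abs_mul, abs_of_pos hN]
  have hS4 : |x| * N < 4 * |t * N ^ m| → S ≤ (4:ℝ) ^ (1 / (1 - m)) := by
    intro h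
    have hNm : 0 < N ^ m := Real.rpow_pos_of_pos hN m
    have ht1 : |t| ≤ 1 := (abs_lt.2 ht).le
    rw [abs_mul, abs_of_pos hNm] at h
    have h' : |x| * N ≤ 4 * N ^ m := by nlinarith
    have e : N = N ^ (1 - m) * N ^ m := by
      rw [← Real.rpow_add hN]; simp
    have h2 : N ^ (1 - m) * |x| ≤ 4 := by
      rw [e] at h'
      have e' : (N ^ (1 - m) * N ^ m) ^ m = N ^ m := by rw [← e]
      rw [e'] at h'
      refine le_of_mul_le_mul_right ?_ hNm
      linarith
    have h3 := Real.rpow_le_rpow (by positivity) h2 (show 0 ≤ 1 / (1 - m) by positivity)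
    rw [Real.mul_rpow (by positivity) hxp.le, ← Real.rpow_mul hN.le,
      mul_one_div_cancel h1m.ne', Real.rpow_one] at h3
    exact h3
  have j1 := core_all m hm0 hm1 φ (deriv φ) M (-(x * N)) (t * N ^ m) S ((4:ℝ) ^ (1 / (1 - m)))
    hd hdc hM hM' (neg_ne_zero.2 (mul_ne_zero hx0 hN.ne')) hS0 (by rw [abs_neg, habs]; exact hSle)
    (by rw [abs_neg, habs]; exact hS4)
  have j2 := core_all m hm0 hm1 φ (deriv φ) M (x * N) (t * N ^ m) S ((4:ℝ) ^ (1 / (1 - m)))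
    hd hdc hM hM' (mul_ne_zero hx0 hN.ne') hS0 (by rw [habs]; exact hSle)
    (by rw [habs]; exact hS4)
  rw [abs_neg] at j1
  rw [habs] at j1 j2
  rw [reduce m hm0 φ hφ.continuous hφsupp N x t hN, norm_mul, Complex.norm_real,
    Real.norm_of_nonneg hN.le]
  have r1 : ∀ y : ℝ, 0 < y → y ^ (-(1:ℝ) / 2) = (√y)⁻¹ := by
    intro y hy
    rw [Real.sqrt_eq_rpow, ← Real.rpow_neg hy.le]
    congr 1; ring
  rw [r1 _ hxp, r1 _ (by positivity)]
  rw [Real.sqrt_mul (by positivity), Real.sqrt_mul hxp.le] at j1 j2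
  have s1 : 0 < √N := Real.sqrt_pos.2 hN
  have s2 : 0 < √|x| := Real.sqrt_pos.2 hxp
  have s3 : 0 < √(1 + S) := Real.sqrt_pos.2 (by positivity)
  have hNN : √N * √N = N := Real.mul_self_sqrt hN.le
  refine (mul_le_mul_of_nonneg_left (norm_add_le _ _) hN.le).trans ?_
  rw [← hK] at j1 j2
  rw [← div_eq_mul_inv, ← div_eq_mul_inv, div_div, le_div_iff₀ (by positivity)]
  have := mul_le_mul_of_nonneg_left (add_le_add j1 j2) s1.le
  refine le_trans (le_of_eq ?_) (this.trans ?_)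
  · nth_rewrite 1 [← hNN]
    ring
  · nlinarith
end

section
/- Let $d \ge 1$ and $m \in (1,\infty)$. Let $\varphi \in C_0^\infty$ be supported in $(1/2,2)$ with $\sum_{k \in \mathbb{Z}} \varphi(2^{-k}r) = 1$ for $r > 0$, and set $\varphi_{\le N}(r) = \sum_{k \le N} \varphi(2^{-k} r)$. Then $\sup_{t \in \mathbb{R}} \big| \int_{\mathbb{R}^d} e^{i(x\cdot\xi + t|\xi|^m)} \frac{\varphi_{\le N}(|\xi|)}{|\xi|^{d/2}} \, d\xi \big| \lesssim |x|^{-d/2}$ uniformly in $N \in \mathbb{Z}$ and $x \ne 0$. -/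
open MeasureTheory Set Complex
open scoped ENNReal RealInnerProductSpace


/-- first derivative test -/
lemma vdc_first {a b δ A s : ℝ} (p p' p'' : ℝ → ℝ) (f f' : ℝ → ℂ) (ha : 0 < a) (hab : a ≤ b)
    (hδ : 0 < δ) (hA : 0 ≤ A) (hs : |s| ≤ 1)
    (hp : ∀ r ∈ Icc a b, HasDerivAt p (p' r) r)
    (hp' : ∀ r ∈ Icc a b, HasDerivAt p' (p'' r) r)
    (hp''c : ContinuousOn p'' (Icc a b))
    (hsgn : ∀ r ∈ Icc a b, |p'' r| = s * p'' r)
    (hlow : ∀ r ∈ Icc a b, δ ≤ |p' r|)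
    (hf : ∀ r ∈ Icc a b, HasDerivAt f (f' r) r)
    (hf'c : ContinuousOn f' (Icc a b))
    (hfb : ∀ r ∈ Icc a b, ‖f r‖ ≤ A * r ^ (-(1/2) : ℝ))
    (hf'b : ∀ r ∈ Icc a b, ‖f' r‖ ≤ A * r ^ (-(3/2) : ℝ)) :
    ‖∫ r in a..b, Complex.exp (Complex.I * (p r : ℂ)) * f r‖ ≤ 6 * A * a ^ (-(1/2) : ℝ) / δ := by
  have huI : uIcc a b = Icc a b := uIcc_of_le hab
  have hne : ∀ r ∈ Icc a b, p' r ≠ 0 := fun r hr h => by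
    have := hlow r hr; rw [h, abs_zero] at this; linarith
  have hneC : ∀ r ∈ Icc a b, (p' r : ℂ) ≠ 0 := fun r hr => by exact_mod_cast hne r hr
  have hpc : ContinuousOn p (Icc a b) := fun r hr => (hp r hr).continuousAt.continuousWithinAt
  have hp'c : ContinuousOn p' (Icc a b) := fun r hr => (hp' r hr).continuousAt.continuousWithinAt
  have hfc : ContinuousOn f (Icc a b) := fun r hr => (hf r hr).continuousAt.continuousWithinAt
  have hpow : ∀ r ∈ Icc a b, r ^ (-(1/2) : ℝ) ≤ a ^ (-(1/2) : ℝ) := fun r hr =>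
    Real.rpow_le_rpow_of_nonpos ha hr.1 (by norm_num)
  set S := A * a ^ (-(1/2) : ℝ) with hS
  have hS0 : 0 ≤ S := by positivity
  have hfS : ∀ r ∈ Icc a b, ‖f r‖ ≤ S := fun r hr =>
    (hfb r hr).trans (mul_le_mul_of_nonneg_left (hpow r hr) hA)
  -- integration by parts
  set e : ℝ → ℂ := fun r => Complex.exp (Complex.I * (p r : ℂ)) with he
  have hen : ∀ r, ‖e r‖ = 1 := fun r => by
    rw [he]; simp only; rw [mul_comm]; exact Complex.norm_exp_ofReal_mul_I _
  have hed : ∀ r ∈ Icc a b, HasDerivAt e (e r * (Complex.I * (p' r : ℂ))) r := fun r hr =>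
    (((hp r hr).ofReal_comp).const_mul Complex.I).cexp
  set g : ℝ → ℂ := fun r => f r / (Complex.I * (p' r : ℂ)) with hg
  set g1 : ℝ → ℂ := fun r => f' r / (Complex.I * (p' r : ℂ)) with hg1
  set g2 : ℝ → ℂ := fun r => f r * (Complex.I * (p'' r : ℂ)) / (Complex.I * (p' r : ℂ)) ^ 2 with hg2
  have hgd : ∀ r ∈ Icc a b, HasDerivAt g (g1 r - g2 r) r := fun r hr => by
    have h1 := (hf r hr).div (((hp' r hr).ofReal_comp).const_mul Complex.I)
      (mul_ne_zero Complex.I_ne_zero (hneC r hr))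
    refine h1.congr_deriv ?_
    simp only [g1, g2]
    have := hneC r hr
    field_simp
  have hec : ContinuousOn e (Icc a b) := fun r hr => (hed r hr).continuousAt.continuousWithinAt
  have hpC : ContinuousOn (fun r => (p' r : ℂ)) (Icc a b) := Complex.continuous_ofReal.comp_continuousOn hp'c
  have hpC2 : ContinuousOn (fun r => (p'' r : ℂ)) (Icc a b) := Complex.continuous_ofReal.comp_continuousOn hp''c
  have hg1c : ContinuousOn g1 (Icc a b) :=
    hf'c.div (continuousOn_const.mul hpC) fun r hr => mul_ne_zero Complex.I_ne_zero (hneC r hr)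
  have hg2c : ContinuousOn g2 (Icc a b) :=
    (hfc.mul (continuousOn_const.mul hpC2)).div ((continuousOn_const.mul hpC).pow 2)
      fun r hr => pow_ne_zero _ (mul_ne_zero Complex.I_ne_zero (hneC r hr))
  have hibp := intervalIntegral.integral_mul_deriv_eq_deriv_mul (a := a) (b := b)
    (u := g) (v := e) (u' := fun r => g1 r - g2 r) (v' := fun r => e r * (Complex.I * (p' r : ℂ)))
    (by rw [huI]; exact hgd) (by rw [huI]; exact hed)
    (ContinuousOn.intervalIntegrable (by rw [huI]; exact hg1c.sub hg2c))
    (ContinuousOn.intervalIntegrable (by rw [huI]; exact hec.mul (continuousOn_const.mul hpC)))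
  have heq : ∫ r in a..b, e r * f r = ∫ r in a..b, g r * (e r * (Complex.I * (p' r : ℂ))) := by
    apply intervalIntegral.integral_congr
    rw [huI]
    intro r hr
    have := hneC r hr
    simp only [hg]
    field_simp
  have hgn : ∀ r ∈ Icc a b, ‖g r‖ ≤ S / δ := fun r hr => by
    simp only [hg, norm_div, norm_mul, Complex.norm_I, one_mul, Complex.norm_real, Real.norm_eq_abs]
    exact div_le_div₀ hS0 (hfS r hr) hδ (hlow r hr)
  -- the two integrals
  have hI1 : ‖∫ r in a..b, g1 r * e r‖ ≤ 2 * S / δ := by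
    have hIntg : IntervalIntegrable (fun r : ℝ => A / δ * r ^ (-(3/2) : ℝ)) volume a b := by
      apply ContinuousOn.intervalIntegrable
      rw [huI]
      exact continuousOn_const.mul (continuousOn_id.rpow_const fun r hr => Or.inl (ha.trans_le hr.1).ne')
    have h1 := intervalIntegral.norm_integral_le_of_norm_le (f := fun r => g1 r * e r)
      (μ := volume) hab (g := fun r : ℝ => A / δ * r ^ (-(3/2) : ℝ)) (by
        filter_upwards with r hr
        have hr' : r ∈ Icc a b := Ioc_subset_Icc_self hr
        rw [norm_mul, hen, mul_one]
        simp only [hg1, norm_div, norm_mul, Complex.norm_I, one_mul, Complex.norm_real, Real.norm_eq_abs]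
        calc ‖f' r‖ / |p' r| ≤ (A * r ^ (-(3/2) : ℝ)) / δ :=
              div_le_div₀ (by have := ha.trans_le hr'.1; positivity) (hf'b r hr') hδ (hlow r hr')
          _ = _ := by ring) hIntg
    refine h1.trans ?_
    rw [intervalIntegral.integral_const_mul, integral_rpow (Or.inr ⟨by norm_num, by
      rw [huI]; exact fun h => absurd h.1 (not_le.2 ha)⟩)]
    have hb : 0 ≤ b ^ (-(1/2) : ℝ) := Real.rpow_nonneg (ha.le.trans hab) _
    have : (-(3/2) + 1 : ℝ) = -(1/2) := by norm_num
    rw [this, hS]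
    have : A / δ * ((b ^ (-(1/2) : ℝ) - a ^ (-(1/2) : ℝ)) / (-(1/2))) =
      2 * (A * a ^ (-(1/2) : ℝ)) / δ - 2 * (A * b ^ (-(1/2) : ℝ)) / δ := by ring
    rw [this]
    have : 0 ≤ 2 * (A * b ^ (-(1/2) : ℝ)) / δ := by positivity
    linarith
  have hI2 : ‖∫ r in a..b, g2 r * e r‖ ≤ 2 * S / δ := by
    have hc : ContinuousOn (fun r : ℝ => -(p'' r) / p' r ^ 2) (uIcc a b) := by
      rw [huI]; exact hp''c.neg.div (hp'c.pow 2) fun r hr => pow_ne_zero _ (hne r hr)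
    have hIntg := hc.intervalIntegrable (μ := volume)
    have h1 := intervalIntegral.norm_integral_le_of_norm_le (f := fun r => g2 r * e r)
      (μ := volume) hab (g := fun r : ℝ => (-S * s) * (-(p'' r) / p' r ^ 2)) (by
        filter_upwards with r hr
        have hr' : r ∈ Icc a b := Ioc_subset_Icc_self hr
        rw [norm_mul, hen, mul_one]
        simp only [hg2, norm_div, norm_mul, norm_pow, Complex.norm_I, one_mul, Complex.norm_real, Real.norm_eq_abs]
        rw [hsgn r hr', sq_abs]
        have : (-S * s) * (-(p'' r) / p' r ^ 2) = S * (s * p'' r) / p' r ^ 2 := by ring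
        rw [this]
        have h2 : 0 ≤ s * p'' r := by rw [← hsgn r hr']; positivity
        gcongr
        exact hfS r hr') (hIntg.const_mul _)
    refine h1.trans ?_
    rw [intervalIntegral.integral_const_mul, intervalIntegral.integral_eq_sub_of_hasDerivAt
      (f := fun r => (p' r)⁻¹) (by rw [huI]; exact fun r hr => (hp' r hr).inv (hne r hr)) hIntg]
    have h3 : ∀ r ∈ Icc a b, |(p' r)⁻¹| ≤ 1 / δ := fun r hr => by
      rw [abs_inv, ← one_div]; exact one_div_le_one_div_of_le hδ (hlow r hr)
    have h4 : |(p' b)⁻¹ - (p' a)⁻¹| ≤ 2 / δ := by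
      refine (abs_sub _ _).trans ?_
      have := h3 a (left_mem_Icc.2 hab)
      have := h3 b (right_mem_Icc.2 hab)
      have : 2 / δ = 1 / δ + 1 / δ := by ring
      linarith
    refine (le_abs_self _).trans ?_
    rw [abs_mul, abs_mul, abs_neg, abs_of_nonneg hS0]
    calc S * |s| * |(p' b)⁻¹ - (p' a)⁻¹| ≤ S * 1 * (2 / δ) := by gcongr
      _ = _ := by ring
  have hsub : ∫ r in a..b, (g1 r - g2 r) * e r = (∫ r in a..b, g1 r * e r) - ∫ r in a..b, g2 r * e r := by
    rw [← intervalIntegral.integral_sub]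
    · simp only [sub_mul]
    · exact ContinuousOn.intervalIntegrable (by rw [huI]; exact hg1c.mul hec)
    · exact ContinuousOn.intervalIntegrable (by rw [huI]; exact hg2c.mul hec)
  rw [heq, hibp, hsub]
  have ha1 : ‖g a * e a‖ ≤ S / δ := by rw [norm_mul, hen, mul_one]; exact hgn a (left_mem_Icc.2 hab)
  have hb1 : ‖g b * e b‖ ≤ S / δ := by rw [norm_mul, hen, mul_one]; exact hgn b (right_mem_Icc.2 hab)
  have t1 := norm_sub_le (g b * e b - g a * e a) ((∫ r in a..b, g1 r * e r) - ∫ r in a..b, g2 r * e r)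
  have t2 := norm_sub_le (g b * e b) (g a * e a)
  have t3 := norm_sub_le (∫ r in a..b, g1 r * e r) (∫ r in a..b, g2 r * e r)
  have : 6 * A * a ^ (-(1/2) : ℝ) / δ = S / δ + S / δ + (2 * S / δ + 2 * S / δ) := by rw [hS]; ring
  linarith

lemma chain_bound (F : ℝ → ℂ) (l x X Y : ℝ) (hX : 0 ≤ X) (hY : 0 ≤ Y)
    (hF : ∀ a b, l ≤ a → a ≤ b → IntervalIntegrable F volume a b)
    (h1 : ∀ a b, l ≤ a → a ≤ b → b ≤ x → ‖∫ r in a..b, F r‖ ≤ X)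
    (h2 : ∀ a b, l ≤ a → a ≤ b → x ≤ a → ‖∫ r in a..b, F r‖ ≤ Y) :
    ∀ a b, l ≤ a → a ≤ b → ‖∫ r in a..b, F r‖ ≤ X + Y := by
  intro a b hl hab
  rcases le_total b x with hb | hb
  · linarith [h1 a b hl hab hb]
  rcases le_total x a with ha | ha
  · linarith [h2 a b hl hab ha]
  rw [← intervalIntegral.integral_add_adjacent_intervals (hF a x hl ha) (hF x b (hl.trans ha) hb)]
  exact (norm_add_le _ _).trans (add_le_add (h1 a x hl ha le_rfl) (h2 x b (hl.trans ha) hb le_rfl))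

lemma one_sub_rpow_low {β z : ℝ} (hβ : 0 < β) (hz : 0 ≤ z) (hz1 : z ≤ 1) :
    min β 1 * (1 - z) ≤ 1 - z ^ β := by
  rcases le_total β 1 with h | h
  · rw [min_eq_left h]
    have := _root_.rpow_one_add_le_one_add_mul_self (s := z - 1) (by linarith) hβ.le h
    rw [show 1 + (z - 1) = z by ring] at this
    linarith
  · rw [min_eq_right h]
    have := Real.rpow_le_rpow_of_exponent_ge' hz hz1 zero_le_one h
    rw [Real.rpow_one] at this
    linarith

lemma abs_one_sub_rpow_low {β y : ℝ} (hβ : 0 < β) (hy : 0 < y) :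
    min β 1 / 2 * min |y - 1| 1 ≤ |1 - y ^ β| := by
  have hk : 0 < min β 1 := lt_min hβ one_pos
  rcases le_total y 1 with h | h
  · have h1 := one_sub_rpow_low hβ hy.le h
    refine le_trans ?_ (h1.trans (le_abs_self _))
    have : min |y - 1| 1 ≤ 1 - y := (min_le_left _ _).trans (by rw [abs_of_nonpos (by linarith)]; linarith)
    have h0 : 0 ≤ min |y - 1| 1 := le_min (abs_nonneg _) zero_le_one
    nlinarith
  · have hz : 0 < y⁻¹ := inv_pos.2 hy
    have h1 := one_sub_rpow_low hβ hz.le (inv_le_one_of_one_le₀ h)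
    rw [Real.inv_rpow hy.le] at h1
    have hyb : 1 ≤ y ^ β := Real.one_le_rpow h hβ.le
    have h2 : 1 - (y ^ β)⁻¹ ≤ y ^ β - 1 := by
      have : y ^ β * (y ^ β)⁻¹ = 1 := mul_inv_cancel₀ (by positivity)
      have : (y ^ β)⁻¹ ≤ 1 := inv_le_one_of_one_le₀ hyb
      nlinarith
    have h3 : min |y - 1| 1 ≤ 2 * (1 - y⁻¹) := by
      have e : 1 - y⁻¹ = (y - 1) / y := by field_simp
      rw [e, abs_of_nonneg (by linarith)]
      rcases le_total y 2 with h' | h'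
      · refine (min_le_left _ _).trans ?_
        rw [← mul_div_assoc, le_div_iff₀ hy]; nlinarith
      · refine (min_le_right _ _).trans ?_
        rw [← mul_div_assoc, le_div_iff₀ hy]; nlinarith
    rw [abs_of_nonpos (a := 1 - y ^ β) (by linarith)]
    nlinarith

lemma vdc_main (m : ℝ) (hm : 1 < m) : ∃ K : ℝ, 0 < K ∧ ∀ (ε t A : ℝ) (f f' : ℝ → ℂ),
    ε ^ 2 = 1 → 0 ≤ A →
    (∀ r, 1 ≤ r → HasDerivAt f (f' r) r) → ContinuousOn f' (Ici 1) →
    (∀ r, 1 ≤ r → ‖f r‖ ≤ A * r ^ (-(1/2) : ℝ)) →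
    (∀ r, 1 ≤ r → ‖f' r‖ ≤ A * r ^ (-(3/2) : ℝ)) →
    ∀ a b, 1 ≤ a → a ≤ b →
      ‖∫ r in a..b, Complex.exp (Complex.I * ((ε * r + t * r ^ m : ℝ) : ℂ)) * f r‖ ≤ K * A := by
  set κ := min (m - 1) 1 / 2 with hκ
  have hκ0 : 0 < κ := by have : 0 < min (m - 1) 1 := lt_min (by linarith) one_pos
                         positivity
  refine ⟨6 + (12 / κ + (12 / κ + (4 + 12 / κ))), by positivity, ?_⟩
  intro ε t A f f' hε hA hf hf'c hfb hf'b
  set F : ℝ → ℂ := fun r => Complex.exp (Complex.I * ((ε * r + t * r ^ m : ℝ) : ℂ)) * f r with hF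
  have hfc : ContinuousOn f (Ici 1) := fun r hr => (hf r hr).continuousAt.continuousWithinAt
  have hFc : ContinuousOn F (Ici 1) := by
    refine ContinuousOn.mul ?_ hfc
    apply Continuous.continuousOn
    have : Continuous fun r : ℝ => r ^ m := Real.continuous_rpow_const (by linarith)
    fun_prop
  have hFi : ∀ a b, 1 ≤ a → a ≤ b → IntervalIntegrable F volume a b := fun a b ha hab =>
    (hFc.mono (by rw [uIcc_of_le hab]; exact fun r hr => ha.trans hr.1)).intervalIntegrable
  -- wrapper
  have W : ∀ a b δ, 1 ≤ a → a ≤ b → 0 < δ → (∀ r ∈ Icc a b, δ ≤ |ε + t * (m * r ^ (m - 1))|) →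
      ‖∫ r in a..b, F r‖ ≤ 6 * A * a ^ (-(1/2) : ℝ) / δ := by
    intro a b δ ha hab hδ hlow
    have hpos : ∀ r ∈ Icc a b, 0 < r := fun r hr => by linarith [hr.1]
    refine vdc_first (s := SignType.sign t) (fun r => ε * r + t * r ^ m) (fun r => ε + t * (m * r ^ (m - 1)))
      (fun r => t * (m * ((m - 1) * r ^ (m - 1 - 1)))) f f' (by linarith) hab hδ hA ?_ ?_ ?_ ?_ ?_ hlow
      (fun r hr => hf r (ha.trans hr.1)) (hf'c.mono fun r hr => ha.trans hr.1)
      (fun r hr => hfb r (ha.trans hr.1)) (fun r hr => hf'b r (ha.trans hr.1))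
    · rcases lt_trichotomy t 0 with h | h | h <;> simp [h]
    · intro r hr
      have h1 := ((hasDerivAt_id r).const_mul ε).add
        ((Real.hasDerivAt_rpow_const (p := m) (Or.inl (hpos r hr).ne')).const_mul t)
      refine HasDerivAt.congr_deriv (f' := ε * 1 + t * (m * r ^ (m - 1))) h1 (by ring)
    · intro r hr
      exact (((Real.hasDerivAt_rpow_const (p := m - 1) (Or.inl (hpos r hr).ne')).const_mul m).const_mul t).const_add ε
    · exact continuousOn_const.mul (continuousOn_const.mul (continuousOn_const.mul
        (continuousOn_id.rpow_const fun r hr => Or.inl (hpos r hr).ne')))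
    · intro r hr
      have h1 : 0 < m * ((m - 1) * r ^ (m - 1 - 1)) := by
        have := hpos r hr; have : 0 < m - 1 := by linarith
        positivity
      rw [abs_mul, abs_of_pos h1, ← sign_mul_self t]; ring
  have hrp : ∀ a : ℝ, 1 ≤ a → a ^ (-(1/2) : ℝ) ≤ 1 := fun a ha =>
    Real.rpow_le_one_of_one_le_of_nonpos ha (by norm_num)
  have hεabs : |ε| = 1 := by
    rw [← sq_abs] at hε; nlinarith [abs_nonneg ε]
  have key : ∀ c : ℝ, |ε + c| = |1 + ε * c| := fun c => by
    have : 1 + ε * c = ε * (ε + c) := by rw [mul_add, ← sq, hε]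
    rw [this, abs_mul, hεabs, one_mul]
  rcases le_or_gt 0 (ε * t) with hεt | hεt
  · intro a b ha hab
    refine (W a b 1 ha hab one_pos ?_).trans ?_
    · intro r hr
      have hr0 : 0 < r := by linarith [hr.1]
      rw [key]
      have : 0 ≤ (ε * t) * (m * r ^ (m - 1)) := by positivity
      refine le_trans ?_ (le_abs_self _)
      linarith
    · have := hrp a ha
      have h12 : 0 ≤ (12 / κ + (12 / κ + (4 + 12 / κ))) := by positivity
      rw [div_one]
      have : 6 * A * a ^ (-(1/2) : ℝ) ≤ 6 * A * 1 := by gcongr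
      nlinarith
  set τ := -(ε * t) * m with hτ
  have hτ0 : 0 < τ := by apply mul_pos <;> linarith
  have hβ : 0 < m - 1 := by linarith
  set r0 := τ ^ (-(1 / (m - 1))) with hr0
  have hr0p : 0 < r0 := Real.rpow_pos_of_pos hτ0 _
  have hr0β : r0 ^ (m - 1) = τ⁻¹ := by
    rw [hr0, ← Real.rpow_mul hτ0.le]
    have : -(1 / (m - 1)) * (m - 1) = -1 := by field_simp
    rw [this, Real.rpow_neg_one]
  have hlow : ∀ r, 1 ≤ r → κ * min (|r - r0| / r0) 1 ≤ |ε + t * (m * r ^ (m - 1))| := by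
    intro r hr
    have hrp : 0 < r := by linarith
    have h1 := abs_one_sub_rpow_low (β := m - 1) (y := r / r0) hβ (by positivity)
    have h2 : 1 + ε * (t * (m * r ^ (m - 1))) = 1 - (r / r0) ^ (m - 1) := by
      rw [Real.div_rpow hrp.le hr0p.le, hr0β, div_inv_eq_mul, hτ]; ring
    have h3 : |r / r0 - 1| = |r - r0| / r0 := by
      rw [div_sub_one hr0p.ne', abs_div, abs_of_pos hr0p]
    rw [key, h2, ← h3]
    exact h1
  set q := Real.sqrt r0 with hq
  have hq0 : 0 < q := Real.sqrt_pos.2 hr0p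
  have hqq : q * q = r0 := Real.mul_self_sqrt hr0p.le
  -- bounds on a^(-1/2)
  have hrp2 : ∀ a : ℝ, 1 ≤ a → r0 / 2 ≤ a → q * a ^ (-(1/2) : ℝ) ≤ 2 := by
    intro a ha hra
    have hap : 0 < a := by linarith
    rw [Real.rpow_neg hap.le, ← Real.sqrt_eq_rpow, ← div_eq_mul_inv, div_le_iff₀ (Real.sqrt_pos.2 hap), hq]
    rw [show (2:ℝ) * √a = √(4 * a) by
      rw [Real.sqrt_mul (by norm_num), show (4:ℝ) = 2 ^ 2 by norm_num, Real.sqrt_sq (by norm_num)]]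
    exact Real.sqrt_le_sqrt (by linarith)
  -- pieces
  have P1 : ∀ a b, 1 ≤ a → a ≤ b → b ≤ r0 / 2 → ‖∫ r in a..b, F r‖ ≤ 12 / κ * A := by
    intro a b ha hab hb
    refine (W a b (κ / 2) ha hab (by positivity) ?_).trans ?_
    · intro r hr
      refine le_trans ?_ (hlow r (ha.trans hr.1))
      rw [div_eq_mul_one_div]
      gcongr
      refine le_min ?_ (by norm_num)
      rw [le_div_iff₀ hr0p, abs_of_nonpos (by linarith [hr.2])]
      linarith [hr.2]
    · calc 6 * A * a ^ (-(1/2) : ℝ) / (κ / 2) ≤ 6 * A * 1 / (κ / 2) := by gcongr; exact hrp a ha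
        _ = 12 / κ * A := by field_simp; ring
  have P2 : ∀ a b, 1 ≤ a → r0 / 2 ≤ a → a ≤ b → (∀ r ∈ Icc a b, q ≤ |r - r0|) →
      ‖∫ r in a..b, F r‖ ≤ 12 / κ * A := by
    intro a b ha hra hab hq1
    have hmin : 0 < min (1 / q) 1 := by positivity
    refine (W a b (κ * min (1 / q) 1) ha hab (by positivity) ?_).trans ?_
    · intro r hr
      refine le_trans ?_ (hlow r (ha.trans hr.1))
      have h5 : 1 / q ≤ |r - r0| / r0 := by
        rw [div_le_div_iff₀ hq0 hr0p]
        nlinarith [hq1 r hr]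
      exact mul_le_mul_of_nonneg_left (min_le_min_right _ h5) hκ0.le
    · rw [div_le_iff₀ (by positivity)]
      have e : 12 / κ * A * (κ * min (1 / q) 1) = 6 * A * (2 * min (1 / q) 1) := by field_simp; ring
      rw [e]
      gcongr
      rcases le_total (1 / q) 1 with h | h
      · rw [min_eq_left h, mul_one_div, le_div_iff₀ hq0, mul_comm]; exact hrp2 a ha hra
      · rw [min_eq_right h]; linarith [hrp a ha]
  have P3 : ∀ a b, 1 ≤ a → r0 / 2 ≤ a → a ≤ b → r0 - q ≤ a → b ≤ r0 + q →
      ‖∫ r in a..b, F r‖ ≤ 4 * A := by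
    intro a b ha hra hab h1 h2
    have hap : 0 < a := by linarith
    have h3 := intervalIntegral.norm_integral_le_of_norm_le_const (f := F) (a := a) (b := b)
      (C := A * a ^ (-(1/2) : ℝ)) (by
        rw [uIoc_of_le hab]
        intro r hr
        have hr1 : 1 ≤ r := ha.trans hr.1.le
        simp only [hF]
        rw [norm_mul, mul_comm Complex.I, Complex.norm_exp_ofReal_mul_I, one_mul]
        refine (hfb r hr1).trans ?_
        exact mul_le_mul_of_nonneg_left (Real.rpow_le_rpow_of_nonpos hap hr.1.le (by norm_num)) hA)
    refine h3.trans ?_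
    rw [abs_of_nonneg (by linarith)]
    have h4 := hrp2 a ha hra
    calc A * a ^ (-(1/2) : ℝ) * (b - a) ≤ A * a ^ (-(1/2) : ℝ) * (2 * q) := by gcongr; linarith
      _ = 2 * A * (q * a ^ (-(1/2) : ℝ)) := by ring
      _ ≤ 2 * A * 2 := by gcongr
      _ = 4 * A := by ring
  have hκA : 0 ≤ 12 / κ * A := by positivity
  have C3 := chain_bound F (max (max 1 (r0 / 2)) (r0 - q)) (r0 + q) (4 * A) (12 / κ * A) (by positivity) hκA
    (fun a b hl hab => hFi a b ((le_max_left _ _).trans ((le_max_left _ _).trans hl)) hab)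
    (fun a b hl hab hb => by
      simp only [max_le_iff] at hl
      exact P3 a b hl.1.1 hl.1.2 hab hl.2 hb)
    (fun a b hl hab hb => by
      simp only [max_le_iff] at hl
      exact P2 a b hl.1.1 hl.1.2 hab fun r hr => by
        rw [abs_of_nonneg] <;> linarith [hr.1])
  have C2 := chain_bound F (max 1 (r0 / 2)) (r0 - q) (12 / κ * A) (4 * A + 12 / κ * A) (by positivity) (by positivity)
    (fun a b hl hab => hFi a b ((le_max_left _ _).trans hl) hab)
    (fun a b hl hab hb => by
      simp only [max_le_iff] at hl
      exact P2 a b hl.1 hl.2 hab fun r hr => by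
        rw [abs_of_nonpos] <;> linarith [hr.2])
    (fun a b hl hab hb => C3 a b (max_le hl hb) hab)
  have C1 := chain_bound F 1 (r0 / 2) (12 / κ * A) (12 / κ * A + (4 * A + 12 / κ * A)) (by positivity) (by positivity)
    hFi P1 (fun a b hl hab hb => C2 a b (max_le hl hb) hab)
  intro a b ha hab
  refine (C1 a b ha hab).trans ?_
  nlinarith

lemma ode_bound (n : ℝ) (c : ℝ) (hn : |c| ≤ n) (u u1 : ℝ → ℂ)
    (hu : ∀ r, 0 < r → HasDerivAt u (u1 r) r)
    (hu1 : ∀ r, 0 < r → HasDerivAt u1 ((c / r ^ 2 - 1 : ℝ) • u r) r) :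
    ∃ K : ℝ, 0 ≤ K ∧ ∀ r, 1 ≤ r → ‖u r‖ ≤ K ∧ ‖u1 r‖ ≤ K := by
  set E : ℝ → ℝ := fun r => ‖u r‖ ^ 2 + ‖u1 r‖ ^ 2 with hE
  set G : ℝ → ℝ := fun r => E r * Real.exp (n / r) with hG
  have hn0 : 0 ≤ n := (abs_nonneg c).trans hn
  have hEd : ∀ r, 0 < r → HasDerivAt E (2 * ⟪u r, u1 r⟫ + 2 * ⟪u1 r, (c / r ^ 2 - 1 : ℝ) • u r⟫) r :=
    fun r hr => (hu r hr).norm_sq.add (hu1 r hr).norm_sq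
  have hGd : ∀ r, 0 < r → HasDerivAt G ((2 * ⟪u r, u1 r⟫ + 2 * ⟪u1 r, (c / r ^ 2 - 1 : ℝ) • u r⟫) * Real.exp (n / r)
      + E r * (Real.exp (n / r) * (n * (-(r ^ 2)⁻¹)))) r :=
    fun r hr => (hEd r hr).mul (((hasDerivAt_inv hr.ne').const_mul n).exp)
  have hanti : AntitoneOn G (Ici 1) := by
    apply antitoneOn_of_deriv_nonpos (convex_Ici 1)
    · exact fun r hr => (hGd r (by linarith [mem_Ici.1 hr])).continuousAt.continuousWithinAt
    · rw [interior_Ici]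
      exact fun r hr => (hGd r (by linarith [mem_Ioi.1 hr])).differentiableAt.differentiableWithinAt
    · rw [interior_Ici]
      intro r hr
      have hr0 : 0 < r := by linarith [mem_Ioi.1 hr]
      rw [(hGd r hr0).deriv, inner_smul_right, real_inner_comm (u r) (u1 r)]
      have h1 : c * ⟪u r, u1 r⟫ ≤ n * (‖u r‖ * ‖u1 r‖) := by
        refine (le_abs_self _).trans ?_
        rw [abs_mul]
        exact mul_le_mul hn (abs_real_inner_le_norm _ _) (abs_nonneg _) hn0
      have h2 : 2 * (‖u r‖ * ‖u1 r‖) ≤ E r := by simp only [hE]; nlinarith [sq_nonneg (‖u r‖ - ‖u1 r‖)]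
      have h3 : 2 * (c * ⟪u r, u1 r⟫) ≤ n * E r := by nlinarith
      have : (2 * ⟪u r, u1 r⟫ + 2 * ((c / r ^ 2 - 1) * ⟪u r, u1 r⟫)) * Real.exp (n / r)
          + E r * (Real.exp (n / r) * (n * (-(r ^ 2)⁻¹))) =
          (2 * (c * ⟪u r, u1 r⟫) - n * E r) * (Real.exp (n / r) * (r ^ 2)⁻¹) := by
        ring
      rw [this]
      exact mul_nonpos_of_nonpos_of_nonneg (by linarith) (by positivity)
  have hG1 : 0 ≤ G 1 := by simp only [hG, hE]; positivity
  refine ⟨Real.sqrt (G 1), Real.sqrt_nonneg _, fun r hr => ?_⟩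
  have h1 : G r ≤ G 1 := hanti (mem_Ici.2 le_rfl) (mem_Ici.2 hr) hr
  have h2 : E r ≤ G r := by
    simp only [hG]
    have h3 : 0 ≤ E r := by simp only [hE]; positivity
    have h4 : 1 ≤ Real.exp (n / r) := Real.one_le_exp (by positivity)
    nlinarith
  have h3 : ‖u r‖ ^ 2 + ‖u1 r‖ ^ 2 ≤ G 1 := h2.trans h1
  constructor
  · exact Real.le_sqrt_of_sq_le (by nlinarith [sq_nonneg ‖u1 r‖])
  · exact Real.le_sqrt_of_sq_le (by nlinarith [sq_nonneg ‖u r‖])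

lemma osc_bound (m : ℝ) (hm : 1 < m) (c : ℝ) (u u1 : ℝ → ℂ) (W : ℝ) (hW : 0 ≤ W)
    (hu : ∀ r, 0 < r → HasDerivAt u (u1 r) r)
    (hu1 : ∀ r, 0 < r → HasDerivAt u1 ((c / r ^ 2 - 1 : ℝ) • u r) r) :
    ∃ C : ℝ, 0 ≤ C ∧ ∀ (w w' : ℝ → ℝ) (t : ℝ), (∀ r, 0 < r → HasDerivAt w (w' r) r) →
      Continuous w' → (∀ r, 0 < r → |w r| ≤ W) → (∀ r, 0 < r → |w' r| ≤ W / r) →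
      ∀ a b, 1 ≤ a → a ≤ b →
      ‖∫ r in a..b, ((r ^ (-(1/2) : ℝ) * w r : ℝ) : ℂ) * Complex.exp (Complex.I * ((t * r ^ m : ℝ) : ℂ)) * u r‖ ≤ C := by
  obtain ⟨K, hK, hub⟩ := ode_bound |c| c le_rfl u u1 hu hu1
  obtain ⟨V, hV, hvdc⟩ := vdc_main m hm
  set A := W * K * (2 + |c|) with hA
  have hA0 : 0 ≤ A := by positivity
  refine ⟨V * A + V * A, by positivity, ?_⟩
  intro w w' t hw hw'c hwb hw'b
  set α : ℝ → ℝ → ℂ := fun ε r => (u r - Complex.I * ε * u1 r) / 2 * Complex.exp (-(Complex.I * ((ε * r : ℝ) : ℂ))) with hα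
  set α' : ℝ → ℝ → ℂ := fun ε r => -(Complex.I * ε * ((c / r ^ 2 : ℝ) : ℂ) * u r) / 2 * Complex.exp (-(Complex.I * ((ε * r : ℝ) : ℂ))) with hα'
  have hexpn : ∀ x : ℝ, ‖Complex.exp (-(Complex.I * (x : ℂ)))‖ = 1 := fun x => by
    have : -(Complex.I * (x : ℂ)) = ((-x : ℝ) : ℂ) * Complex.I := by push_cast; ring
    rw [this, Complex.norm_exp_ofReal_mul_I]
  have hαd : ∀ ε r : ℝ, ε ^ 2 = 1 → 0 < r → HasDerivAt (α ε) (α' ε r) r := by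
    intro ε r hε hr
    have h1 := ((hu r hr).sub ((hu1 r hr).const_mul (Complex.I * ε))).div_const 2
    have h2 := ((((hasDerivAt_id r).const_mul ε).ofReal_comp).const_mul Complex.I).neg.cexp
    refine (h1.mul h2).congr_deriv ?_
    have hεC : (ε : ℂ) ^ 2 = 1 := by exact_mod_cast hε
    have hI : Complex.I ^ 2 = -1 := Complex.I_sq
    simp only [hα', Complex.real_smul, Complex.ofReal_sub, Complex.ofReal_one, Complex.ofReal_mul, mul_one, id, Pi.sub_apply, Pi.neg_apply]
    linear_combination (Complex.exp (-(Complex.I * (ε * r)))) * (u1 r / 2 * Complex.I ^ 2 * hεC + u1 r / 2 * hI)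
  have hαb : ∀ ε r : ℝ, ε ^ 2 = 1 → 1 ≤ r → ‖α ε r‖ ≤ K := by
    intro ε r hε hr
    have hεn : |ε| = 1 := by
      rw [← sq_abs] at hε; nlinarith [abs_nonneg ε]
    simp only [hα]
    rw [norm_mul, hexpn, mul_one, norm_div, Complex.norm_ofNat, div_le_iff₀ two_pos]
    refine (norm_sub_le _ _).trans ?_
    rw [norm_mul, norm_mul, Complex.norm_I, Complex.norm_real, Real.norm_eq_abs, hεn]
    linarith [hub r hr]
  have hα'b : ∀ ε r : ℝ, ε ^ 2 = 1 → 1 ≤ r → ‖α' ε r‖ ≤ |c| * K / r := by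
    intro ε r hε hr
    have hεn : |ε| = 1 := by
      rw [← sq_abs] at hε; nlinarith [abs_nonneg ε]
    have hr0 : 0 < r := by linarith
    simp only [hα']
    rw [norm_mul, hexpn, mul_one, norm_div, norm_neg, Complex.norm_ofNat, div_le_iff₀ two_pos]
    rw [norm_mul, norm_mul, norm_mul, Complex.norm_I, Complex.norm_real, Complex.norm_real, Real.norm_eq_abs, hεn,
      Real.norm_eq_abs, abs_div, abs_of_pos (by positivity : 0 < r ^ 2)]
    have h1 := (hub r hr).1
    have h2 : |c| / r ^ 2 ≤ |c| / r := by
      apply div_le_div_of_nonneg_left (abs_nonneg _) hr0; nlinarith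
    have h3 : |c| / r ^ 2 * ‖u r‖ ≤ |c| / r * K := mul_le_mul h2 h1 (norm_nonneg _) (by positivity)
    have h4 : |c| * K / r = |c| / r * K := by ring
    have h5 : 0 ≤ |c| / r * K := by positivity
    rw [h4]; linarith
  set f : ℝ → ℝ → ℂ := fun ε r => ((r ^ (-(1/2) : ℝ) * w r : ℝ) : ℂ) * α ε r with hf
  set f' : ℝ → ℝ → ℂ := fun ε r => (((-(1/2)) * r ^ (-(1/2) - 1 : ℝ) * w r + r ^ (-(1/2) : ℝ) * w' r : ℝ) : ℂ) * α ε r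
      + ((r ^ (-(1/2) : ℝ) * w r : ℝ) : ℂ) * α' ε r with hf'
  have hfd : ∀ ε r : ℝ, ε ^ 2 = 1 → 1 ≤ r → HasDerivAt (f ε) (f' ε r) r := by
    intro ε r hε hr
    have hr0 : 0 < r := by linarith
    exact (((Real.hasDerivAt_rpow_const (Or.inl hr0.ne')).mul (hw r hr0)).ofReal_comp).mul (hαd ε r hε hr0)
  have huc : ContinuousOn u (Ici 1) := fun r hr => (hu r (by linarith [mem_Ici.1 hr])).continuousAt.continuousWithinAt
  have hu1c : ContinuousOn u1 (Ici 1) := fun r hr => (hu1 r (by linarith [mem_Ici.1 hr])).continuousAt.continuousWithinAt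
  have hwc : ContinuousOn w (Ici 1) := fun r hr => (hw r (by linarith [mem_Ici.1 hr])).continuousAt.continuousWithinAt
  have hpc : ∀ p : ℝ, ContinuousOn (fun r : ℝ => r ^ p) (Ici 1) := fun p =>
    continuousOn_id.rpow_const fun r hr => Or.inl (ne_of_gt (lt_of_lt_of_le one_pos hr))
  have hexpc : ∀ ε : ℝ, ContinuousOn (fun r : ℝ => Complex.exp (-(Complex.I * ((ε * r : ℝ) : ℂ)))) (Ici 1) := fun ε => by
    apply Continuous.continuousOn; fun_prop
  have hαc : ∀ ε : ℝ, ContinuousOn (α ε) (Ici 1) := fun ε =>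
    ((huc.sub (continuousOn_const.mul hu1c)).div_const _).mul (hexpc ε)
  have hcc : ContinuousOn (fun r : ℝ => ((c / r ^ 2 : ℝ) : ℂ)) (Ici 1) :=
    Complex.continuous_ofReal.comp_continuousOn (continuousOn_const.div (continuousOn_id.pow 2)
      fun r hr => pow_ne_zero _ (ne_of_gt (lt_of_lt_of_le one_pos hr)))
  have hα'c : ∀ ε : ℝ, ContinuousOn (α' ε) (Ici 1) := fun ε =>
    ((((continuousOn_const.mul hcc).mul huc).neg).div_const _).mul (hexpc ε)
  have hf'c : ∀ ε : ℝ, ContinuousOn (f' ε) (Ici 1) := fun ε =>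
    ((Complex.continuous_ofReal.comp_continuousOn (((continuousOn_const.mul (hpc _)).mul hwc).add
      ((hpc _).mul hw'c.continuousOn))).mul (hαc ε)).add
      ((Complex.continuous_ofReal.comp_continuousOn ((hpc _).mul hwc)).mul (hα'c ε))
  have hfb : ∀ ε r : ℝ, ε ^ 2 = 1 → 1 ≤ r → ‖f ε r‖ ≤ A * r ^ (-(1/2) : ℝ) := by
    intro ε r hε hr
    have hr0 : 0 < r := by linarith
    simp only [hf]
    rw [norm_mul, Complex.norm_real, Real.norm_eq_abs, abs_mul, abs_of_pos (Real.rpow_pos_of_pos hr0 _)]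
    have h1 : |w r| * ‖α ε r‖ ≤ W * K := mul_le_mul (hwb r hr0) (hαb ε r hε hr) (norm_nonneg _) hW
    have h2 : W * K ≤ A := by
      rw [hA]; have : 0 ≤ W * K := by positivity
      nlinarith [abs_nonneg c]
    calc r ^ (-(1/2) : ℝ) * |w r| * ‖α ε r‖ = (|w r| * ‖α ε r‖) * r ^ (-(1/2) : ℝ) := by ring
      _ ≤ A * r ^ (-(1/2) : ℝ) := by gcongr; exact h1.trans h2
  have hf'b : ∀ ε r : ℝ, ε ^ 2 = 1 → 1 ≤ r → ‖f' ε r‖ ≤ A * r ^ (-(3/2) : ℝ) := by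
    intro ε r hε hr
    have hr0 : 0 < r := by linarith
    simp only [hf']
    have e1 : r ^ (-(1/2) - 1 : ℝ) = r ^ (-(3/2) : ℝ) := by norm_num
    have e2 : r ^ (-(1/2) : ℝ) = r ^ (-(3/2) : ℝ) * r := by
      rw [← Real.rpow_add_one hr0.ne']; norm_num
    set X := r ^ (-(3/2) : ℝ) with hX
    have hX0 : 0 < X := Real.rpow_pos_of_pos hr0 _
    rw [e1, e2]
    refine (norm_add_le _ _).trans ?_
    rw [norm_mul _ (α ε r), norm_mul _ (α' ε r), Complex.norm_real, Complex.norm_real, Real.norm_eq_abs, Real.norm_eq_abs]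
    have hW' := hw'b r hr0
    rw [le_div_iff₀ hr0] at hW'
    have h1 : |-(1/2) * X * w r + X * r * w' r| ≤ 2 * W * X := by
      refine (abs_add_le _ _).trans ?_
      rw [abs_mul, abs_mul, abs_mul, abs_mul, abs_of_pos hX0, abs_of_pos hr0]
      have := hwb r hr0
      norm_num
      nlinarith
    have h2 : |X * r * w r| ≤ X * r * W := by
      rw [abs_mul, abs_of_pos (by positivity)]; gcongr; exact hwb r hr0
    have h3 := mul_le_mul h1 (hαb ε r hε hr) (norm_nonneg _) (by positivity)
    have h4 := mul_le_mul h2 (hα'b ε r hε hr) (norm_nonneg _) (by positivity)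
    have h5 : X * r * W * (|c| * K / r) = X * W * |c| * K := by field_simp
    have h6 : A * X = 2 * W * X * K + X * W * |c| * K := by rw [hA]; ring
    linarith
  intro a b ha hab
  have hfc : ∀ ε : ℝ, ContinuousOn (f ε) (Ici 1) := fun ε =>
    (Complex.continuous_ofReal.comp_continuousOn ((hpc _).mul hwc)).mul (hαc ε)
  have hIntg : ∀ ε : ℝ, IntervalIntegrable (fun r : ℝ => Complex.exp (Complex.I * ((ε * r + t * r ^ m : ℝ) : ℂ)) * f ε r) volume a b := by
    intro ε
    apply ContinuousOn.intervalIntegrable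
    rw [uIcc_of_le hab]
    refine ContinuousOn.mul ?_ ((hfc ε).mono fun r hr => ha.trans hr.1)
    apply Continuous.continuousOn
    have : Continuous fun r : ℝ => r ^ m := Real.continuous_rpow_const (by linarith)
    fun_prop
  have heq : ∫ r in a..b, ((r ^ (-(1/2) : ℝ) * w r : ℝ) : ℂ) * Complex.exp (Complex.I * ((t * r ^ m : ℝ) : ℂ)) * u r
      = (∫ r in a..b, Complex.exp (Complex.I * (((1:ℝ) * r + t * r ^ m : ℝ) : ℂ)) * f 1 r)
        + ∫ r in a..b, Complex.exp (Complex.I * (((-1:ℝ) * r + t * r ^ m : ℝ) : ℂ)) * f (-1) r := by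
    rw [← intervalIntegral.integral_add (hIntg 1) (hIntg (-1))]
    congr 1
    funext r
    have key : ∀ ε : ℝ, Complex.exp (Complex.I * ((ε * r + t * r ^ m : ℝ) : ℂ)) * f ε r =
        ((r ^ (-(1/2) : ℝ) * w r : ℝ) : ℂ) * Complex.exp (Complex.I * ((t * r ^ m : ℝ) : ℂ)) *
          ((u r - Complex.I * ε * u1 r) / 2) := by
      intro ε
      have : Complex.exp (Complex.I * ((ε * r + t * r ^ m : ℝ) : ℂ)) * Complex.exp (-(Complex.I * ((ε * r : ℝ) : ℂ)))
          = Complex.exp (Complex.I * ((t * r ^ m : ℝ) : ℂ)) := by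
        rw [← Complex.exp_add]; congr 1; push_cast; ring
      rw [← this]; simp only [hf, hα]; ring
    rw [key, key]
    push_cast
    ring
  rw [heq]
  refine (norm_add_le _ _).trans (add_le_add ?_ ?_)
  · exact hvdc 1 t A (f 1) (f' 1) (by norm_num) hA0 (fun r hr => hfd 1 r (by norm_num) hr) (hf'c 1)
      (fun r hr => hfb 1 r (by norm_num) hr) (fun r hr => hf'b 1 r (by norm_num) hr) a b ha hab
  · exact hvdc (-1) t A (f (-1)) (f' (-1)) (by norm_num) hA0 (fun r hr => hfd (-1) r (by norm_num) hr) (hf'c (-1))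
      (fun r hr => hfb (-1) r (by norm_num) hr) (fun r hr => hf'b (-1) r (by norm_num) hr) a b ha hab

lemma radial_bound (m : ℝ) (hm : 1 < m) (k : ℝ) (hk : 0 ≤ k) (g g1 : ℝ → ℂ) (S W : ℝ) (hS : 0 ≤ S) (hW : 0 ≤ W)
    (hg : ∀ r, HasDerivAt g (g1 r) r)
    (hg1 : ∀ r, 0 < r → HasDerivAt g1 (-g r - ((2 * k / r : ℝ) : ℂ) * g1 r) r)
    (hgb : ∀ r, ‖g r‖ ≤ S) :
    ∃ C : ℝ, 0 ≤ C ∧ ∀ (w w' : ℝ → ℝ) (t : ℝ), (∀ r, HasDerivAt w (w' r) r) →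
      Continuous w' → (∀ r, 0 < r → |w r| ≤ W) → (∀ r, 0 < r → |w' r| ≤ W / r) →
      ∀ a b, 0 ≤ a → a ≤ b →
      IntervalIntegrable (fun r : ℝ => ((r ^ (k - 1/2) * w r : ℝ) : ℂ) * Complex.exp (Complex.I * ((t * r ^ m : ℝ) : ℂ)) * g r) volume a b ∧
      ‖∫ r in a..b, ((r ^ (k - 1/2) * w r : ℝ) : ℂ) * Complex.exp (Complex.I * ((t * r ^ m : ℝ) : ℂ)) * g r‖ ≤ C := by
  set u : ℝ → ℂ := fun r => ((r ^ k : ℝ) : ℂ) * g r with hu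
  set u1 : ℝ → ℂ := fun r => ((k * r ^ (k - 1) : ℝ) : ℂ) * g r + ((r ^ k : ℝ) : ℂ) * g1 r with hu1
  have hud : ∀ r, 0 < r → HasDerivAt u (u1 r) r := fun r hr =>
    ((Real.hasDerivAt_rpow_const (Or.inl hr.ne')).ofReal_comp).mul (hg r)
  have hu1d : ∀ r, 0 < r → HasDerivAt u1 ((k * (k - 1) / r ^ 2 - 1 : ℝ) • u r) r := by
    intro r hr
    have h1 := ((((Real.hasDerivAt_rpow_const (p := k - 1) (Or.inl hr.ne')).const_mul k).ofReal_comp).mul (hg r)).add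
      (((Real.hasDerivAt_rpow_const (p := k) (Or.inl hr.ne')).ofReal_comp).mul (hg1 r hr))
    refine h1.congr_deriv ?_
    have e1 : r ^ k = r ^ (k - 1 - 1) * r ^ 2 := by
      rw [← Real.rpow_natCast, ← Real.rpow_add hr]; congr 1; push_cast; ring
    have e2 : r ^ (k - 1) = r ^ (k - 1 - 1) * r := by
      rw [← Real.rpow_add_one hr.ne']; congr 1; ring
    simp only [hu, Complex.real_smul]
    rw [e1, e2]
    have hrC : (r : ℂ) ≠ 0 := by exact_mod_cast hr.ne'
    push_cast
    field_simp
    ring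
  obtain ⟨C0, hC0, hosc⟩ := osc_bound m hm (k * (k - 1)) u u1 W hW hud hu1d
  set Q : ℝ → ℝ := fun r => W * S * r ^ (k - 1/2) with hQ
  have hQi : ∀ a b, IntervalIntegrable Q volume a b := fun a b =>
    (intervalIntegral.intervalIntegrable_rpow' (by linarith)).const_mul _
  have hQ0 : 0 ≤ ∫ r in (0:ℝ)..1, Q r := intervalIntegral.integral_nonneg zero_le_one fun r hr => by
    have := hr.1; simp only [hQ]; positivity
  refine ⟨(∫ r in (0:ℝ)..1, Q r) + C0, by positivity, ?_⟩
  intro w w' t hw hw'c hwb hw'b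
  set F : ℝ → ℂ := fun r : ℝ => ((r ^ (k - 1/2) * w r : ℝ) : ℂ) * Complex.exp (Complex.I * ((t * r ^ m : ℝ) : ℂ)) * g r with hF
  have hFb : ∀ r, 0 < r → ‖F r‖ ≤ Q r := by
    intro r hr
    simp only [hF, hQ]
    rw [norm_mul, norm_mul, mul_comm Complex.I, Complex.norm_exp_ofReal_mul_I, mul_one, Complex.norm_real,
      Real.norm_eq_abs, abs_mul, abs_of_pos (Real.rpow_pos_of_pos hr _)]
    have h1 := mul_le_mul (hwb r hr) (hgb r) (norm_nonneg _) hW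
    calc r ^ (k - 1/2) * |w r| * ‖g r‖ = (|w r| * ‖g r‖) * r ^ (k - 1/2) := by ring
      _ ≤ W * S * r ^ (k - 1/2) := by gcongr
  have hgc : Continuous g := continuous_iff_continuousAt.2 fun r => (hg r).continuousAt
  have hwc : Continuous w := continuous_iff_continuousAt.2 fun r => (hw r).continuousAt
  have hFm : Measurable F := by
    have := hgc.measurable
    have := hwc.measurable
    fun_prop
  have hFi : ∀ a b, 0 ≤ a → a ≤ b → IntervalIntegrable F volume a b := by
    intro a b ha hab
    rw [intervalIntegrable_iff_integrableOn_Ioc_of_le hab]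
    refine Integrable.mono' ((intervalIntegrable_iff_integrableOn_Ioc_of_le hab).1 (hQi a b)) hFm.aestronglyMeasurable ?_
    filter_upwards [ae_restrict_mem measurableSet_Ioc] with r hr
    exact hFb r (ha.trans_lt hr.1)
  intro a b ha hab
  refine ⟨hFi a b ha hab, ?_⟩
  refine chain_bound F 0 1 _ _ hQ0 hC0 hFi ?_ ?_ a b ha hab
  · intro a b ha hab hb
    refine (intervalIntegral.norm_integral_le_of_norm_le hab ?_ (hQi a b)).trans ?_
    · filter_upwards with r hr
      exact hFb r (ha.trans_lt hr.1)
    · refine intervalIntegral.integral_mono_interval ha hab hb ?_ (hQi 0 1)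
      filter_upwards [ae_restrict_mem measurableSet_Ioc] with r hr
      have := hr.1
      simp only [hQ, Pi.zero_apply]; positivity
  · intro a b _ hab ha
    have h1 := hosc w w' t (fun r _ => hw r) hw'c hwb hw'b a b ha hab
    refine le_of_eq_of_le ?_ h1
    congr 1
    apply intervalIntegral.integral_congr
    rw [uIcc_of_le hab]
    intro r hr
    have hr0 : 0 < r := by linarith [hr.1]
    have e : r ^ (k - 1/2) = r ^ (-(1/2) : ℝ) * r ^ k := by
      rw [← Real.rpow_add hr0]; congr 1; ring
    simp only [hF, hu]
    rw [e]
    push_cast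
    ring

section sphere_part

open scoped Pointwise

variable {d : ℕ}

/-- A linear isometry acts on the unit sphere. -/
noncomputable def sphMap (L : EuclideanSpace ℝ (Fin d) ≃ₗᵢ[ℝ] EuclideanSpace ℝ (Fin d))
    (ω : Metric.sphere (0 : EuclideanSpace ℝ (Fin d)) 1) : Metric.sphere (0 : EuclideanSpace ℝ (Fin d)) 1 :=
  ⟨L ω, by have := ω.2; simpa using this⟩

lemma sphMap_mp (L : EuclideanSpace ℝ (Fin d) ≃ₗᵢ[ℝ] EuclideanSpace ℝ (Fin d)) :
    MeasurePreserving (sphMap L) (volume : Measure (EuclideanSpace ℝ (Fin d))).toSphere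
      (volume : Measure (EuclideanSpace ℝ (Fin d))).toSphere := by
  have hc : Continuous (sphMap L) := by
    unfold sphMap
    exact Continuous.subtype_mk (L.continuous.comp continuous_subtype_val) _
  refine ⟨hc.measurable, ?_⟩
  ext s hs
  rw [Measure.map_apply hc.measurable hs, Measure.toSphere_apply' _ (hc.measurable hs), Measure.toSphere_apply' _ hs]
  congr 1
  rw [← L.measurePreserving.measure_preimage_emb L.toHomeomorph.measurableEmbedding
    (Ioo (0 : ℝ) 1 • (Set.image Subtype.val s : Set (EuclideanSpace ℝ (Fin d))))]
  congr 1
  ext ξ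
  simp only [Set.mem_smul, Set.mem_preimage, Set.mem_image]
  constructor
  · rintro ⟨r, hr, _, ⟨ω, hω, rfl⟩, rfl⟩
    exact ⟨r, hr, L ω, ⟨sphMap L ω, hω, rfl⟩, by simp⟩
  · rintro ⟨r, hr, _, ⟨ω, hω, rfl⟩, h⟩
    refine ⟨r, hr, L.symm ω, ⟨sphMap L.symm ω, ?_, rfl⟩, ?_⟩
    · have : sphMap L (sphMap L.symm ω) = ω := Subtype.ext (by simp [sphMap])
      rwa [this]
    · apply L.injective; rw [← h]; simp

/-- Fourier transform of the surface measure. -/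
noncomputable def sphFT (x : EuclideanSpace ℝ (Fin d)) : ℂ :=
  ∫ ω : Metric.sphere (0 : EuclideanSpace ℝ (Fin d)) 1, Complex.exp (Complex.I * ((⟪x, (ω : EuclideanSpace ℝ (Fin d))⟫ : ℝ) : ℂ))
    ∂(volume : Measure (EuclideanSpace ℝ (Fin d))).toSphere

lemma sphFT_radial (x y : EuclideanSpace ℝ (Fin d)) (h : ‖x‖ = ‖y‖) : sphFT x = sphFT y := by
  set L := (ℝ ∙ (x - y))ᗮ.reflection with hL
  have hLx : L x = y := Submodule.reflection_sub h
  have hm : MeasurableEmbedding (sphMap L) := by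
    have hc : ∀ L : EuclideanSpace ℝ (Fin d) ≃ₗᵢ[ℝ] EuclideanSpace ℝ (Fin d), Continuous (sphMap L) := fun L => by
      unfold sphMap
      exact Continuous.subtype_mk (L.continuous.comp continuous_subtype_val) _
    exact Homeomorph.measurableEmbedding
      { toFun := sphMap L, invFun := sphMap L.symm,
        left_inv := fun ω => Subtype.ext (by simp [sphMap])
        right_inv := fun ω => Subtype.ext (by simp [sphMap])
        continuous_toFun := hc L
        continuous_invFun := hc L.symm }
  have := (sphMap_mp L).integral_comp hm (fun ω => Complex.exp (Complex.I * ((⟪y, (ω : EuclideanSpace ℝ (Fin d))⟫ : ℝ) : ℂ)))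
  unfold sphFT
  rw [← this]
  congr 1
  funext ω
  have : ⟪y, (sphMap L ω : EuclideanSpace ℝ (Fin d))⟫ = ⟪x, (ω : EuclideanSpace ℝ (Fin d))⟫ := by
    rw [← hLx]; exact L.inner_map_map _ _
  rw [this]

lemma param_deriv {Ω : Type*} [MeasurableSpace Ω] (μ : Measure Ω) [IsFiniteMeasure μ] (c : Ω → ℂ) (a b : Ω → ℝ)
    (hc : Measurable c) (ha : Measurable a) (hb : Measurable b) (hc1 : ∀ ω, ‖c ω‖ ≤ 1) (hb1 : ∀ ω, |b ω| ≤ 1) (s : ℝ) :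
    HasDerivAt (fun s : ℝ => ∫ ω, c ω * Complex.exp (Complex.I * ((a ω + s * b ω : ℝ) : ℂ)) ∂μ)
      (∫ ω, (c ω * (Complex.I * b ω)) * Complex.exp (Complex.I * ((a ω + s * b ω : ℝ) : ℂ)) ∂μ) s := by
  have hen : ∀ x : ℝ, ‖Complex.exp (Complex.I * (x : ℂ))‖ = 1 := fun x => by
    rw [mul_comm, Complex.norm_exp_ofReal_mul_I]
  refine (hasDerivAt_integral_of_dominated_loc_of_deriv_le (bound := fun _ => 1) (s := univ) (x₀ := s)
    (F := fun (s : ℝ) ω => c ω * Complex.exp (Complex.I * ((a ω + s * b ω : ℝ) : ℂ)))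
    (F' := fun (s : ℝ) ω => (c ω * (Complex.I * b ω)) * Complex.exp (Complex.I * ((a ω + s * b ω : ℝ) : ℂ)))
    Filter.univ_mem ?_ ?_ ?_ ?_ ?_ ?_).2
  · exact Filter.Eventually.of_forall fun s => Measurable.aestronglyMeasurable (by fun_prop)
  · refine Integrable.mono' (integrable_const 1) (Measurable.aestronglyMeasurable (by fun_prop)) ?_
    refine Filter.Eventually.of_forall fun ω => ?_
    rw [norm_mul, hen, mul_one]; exact hc1 ω
  · exact Measurable.aestronglyMeasurable (by fun_prop)
  · refine Filter.Eventually.of_forall fun ω s _ => ?_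
    rw [norm_mul, hen, mul_one, norm_mul, norm_mul, Complex.norm_I, one_mul, Complex.norm_real]
    exact mul_le_one₀ (hc1 ω) (norm_nonneg _) (hb1 ω)
  · exact integrable_const 1
  · refine Filter.Eventually.of_forall fun ω s _ => ?_
    have h1 := (((((hasDerivAt_id s).mul_const (b ω)).const_add (a ω)).ofReal_comp).const_mul Complex.I).cexp.const_mul (c ω)
    refine h1.congr_deriv ?_
    simp only [one_mul, id]
    ring

lemma sphere_ode (hd : 1 ≤ d) : ∃ (g g1 : ℝ → ℂ) (S : ℝ), 0 ≤ S ∧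
    (∀ x : EuclideanSpace ℝ (Fin d), sphFT x = g ‖x‖) ∧
    (∀ r, HasDerivAt g (g1 r) r) ∧
    (∀ r, 0 < r → HasDerivAt g1 (-g r - ((2 * (((d : ℝ) - 1) / 2) / r : ℝ) : ℂ) * g1 r) r) ∧
    (∀ r, ‖g r‖ ≤ S) := by
  set σ := (volume : Measure (EuclideanSpace ℝ (Fin d))).toSphere with hσ
  set i0 : Fin d := ⟨0, hd⟩ with hi0
  set X : Fin d → Metric.sphere (0 : EuclideanSpace ℝ (Fin d)) 1 → ℝ := fun j ω => (ω : EuclideanSpace ℝ (Fin d)) j with hX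
  have hXc : ∀ j, Continuous (X j) := fun j => by
    simp only [hX]; fun_prop
  have hXm : ∀ j, Measurable (X j) := fun j => (hXc j).measurable
  have hXsum : ∀ ω, ∑ j, X j ω ^ 2 = 1 := fun ω => by
    have h1 : ‖(ω : EuclideanSpace ℝ (Fin d))‖ = 1 := by simpa using ω.2
    have h2 := EuclideanSpace.norm_sq_eq (ω : EuclideanSpace ℝ (Fin d))
    rw [h1] at h2
    simpa [hX] using h2.symm
  have hX1 : ∀ j ω, |X j ω| ≤ 1 := fun j ω => by
    have h1 : X j ω ^ 2 ≤ ∑ j, X j ω ^ 2 := Finset.single_le_sum (f := fun j => X j ω ^ 2) (fun i _ => sq_nonneg _) (Finset.mem_univ j)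
    rw [hXsum] at h1
    exact (sq_le_one_iff_abs_le_one _).1 h1
  have hen : ∀ x : ℝ, ‖Complex.exp (Complex.I * (x : ℂ))‖ = 1 := fun x => by
    rw [mul_comm, Complex.norm_exp_ofReal_mul_I]
  set g : ℝ → ℂ := fun r => ∫ ω, Complex.exp (Complex.I * ((r * X i0 ω : ℝ) : ℂ)) ∂σ with hg
  set g1 : ℝ → ℂ := fun r => ∫ ω, (Complex.I * X i0 ω) * Complex.exp (Complex.I * ((r * X i0 ω : ℝ) : ℂ)) ∂σ with hg1
  set Y : Fin d → ℝ → ℂ := fun j r => ∫ ω, ((Complex.I * X j ω) * (Complex.I * X j ω)) * Complex.exp (Complex.I * ((r * X i0 ω : ℝ) : ℂ)) ∂σ with hY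
  have hgd : ∀ r, HasDerivAt g (g1 r) r := fun r => by
    have := param_deriv σ (fun _ => 1) (fun _ => 0) (X i0) (by fun_prop) (by fun_prop) (hXm _) (by simp) (hX1 _) r
    simpa only [one_mul, zero_add] using this
  have hg1d : ∀ r, HasDerivAt g1 (Y i0 r) r := fun r => by
    have := param_deriv σ (fun ω => Complex.I * X i0 ω) (fun _ => 0) (X i0)
      (by have := hXm i0; fun_prop) (by fun_prop) (hXm _) (fun ω => by simpa using hX1 i0 ω) (hX1 _) r
    simpa only [one_mul, zero_add] using this
  have hrad : ∀ x : EuclideanSpace ℝ (Fin d), sphFT x = g ‖x‖ := by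
    intro x
    rw [sphFT_radial x (EuclideanSpace.single i0 ‖x‖) (by simp)]
    simp only [sphFT, hg]
    congr 1
    funext ω
    congr 4
    rw [EuclideanSpace.inner_single_left]
    simp [hX]
  have hIntg : ∀ j r, Integrable (fun ω => ((Complex.I * X j ω) * (Complex.I * X j ω)) * Complex.exp (Complex.I * ((r * X i0 ω : ℝ) : ℂ))) σ := by
    intro j r
    refine Integrable.mono' (integrable_const 1) (Measurable.aestronglyMeasurable ?_) ?_
    · have := hXm i0; have := hXm j; fun_prop
    · refine Filter.Eventually.of_forall fun ω => ?_
      rw [norm_mul, hen, mul_one, norm_mul, norm_mul, Complex.norm_I, one_mul, Complex.norm_real]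
      exact mul_le_one₀ (hX1 j ω) (norm_nonneg _) (hX1 j ω)
  have hYj : ∀ j, j ≠ i0 → ∀ r, 0 < r → Y j r = g1 r / r := by
    intro j hj r hr
    set ρ : ℝ → ℝ := fun s => Real.sqrt (r ^ 2 + s ^ 2) with hρ
    have hpos : ∀ s, 0 < r ^ 2 + s ^ 2 := fun s => by positivity
    have hρpos : ∀ s, 0 < ρ s := fun s => Real.sqrt_pos.2 (hpos s)
    have hρd : ∀ s, HasDerivAt ρ (s / ρ s) s := fun s => by
      have h1 := (((hasDerivAt_id s).pow 2).const_add (r ^ 2)).sqrt (hpos s).ne'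
      refine h1.congr_deriv ?_
      have h2 := (hρpos s).ne'
      simp only [hρ, id] at h2 ⊢
      simp only [Pi.pow_apply, id]
      rw [div_eq_div_iff (by simpa using h2) h2]
      push_cast
      ring
    have hH : ∀ s : ℝ, ∫ ω, (1:ℂ) * Complex.exp (Complex.I * ((r * X i0 ω + s * X j ω : ℝ) : ℂ)) ∂σ = g (ρ s) := by
      intro s
      have h1 := hrad (EuclideanSpace.single i0 r + EuclideanSpace.single j s)
      have h2 : ‖(EuclideanSpace.single i0 r + EuclideanSpace.single j s : EuclideanSpace ℝ (Fin d))‖ = ρ s := by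
        simp only [hρ]
        rw [eq_comm, Real.sqrt_eq_iff_mul_self_eq (hpos s).le (norm_nonneg _),
          norm_add_sq_eq_norm_sq_add_norm_sq_real]
        · simp [sq]
        · rw [EuclideanSpace.inner_single_left]; simp [hj.symm]
      rw [h2] at h1
      rw [← h1]
      simp only [sphFT, one_mul]
      congr 1
      funext ω
      congr 4
      rw [inner_add_left, EuclideanSpace.inner_single_left, EuclideanSpace.inner_single_left]
      simp [hX]
    have hH1 : ∀ s : ℝ, ∫ ω, (Complex.I * X j ω) * Complex.exp (Complex.I * ((r * X i0 ω + s * X j ω : ℝ) : ℂ)) ∂σ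
        = (s : ℂ) * (g1 (ρ s) / ρ s) := by
      intro s
      have h1 := param_deriv σ (fun _ => 1) (fun ω => r * X i0 ω) (X j) (by fun_prop)
        (by have := hXm i0; fun_prop) (hXm _) (by simp) (hX1 _) s
      simp only [hH] at h1
      have h2 := (hgd (ρ s)).scomp s (hρd s)
      have h3 := h1.unique h2
      simp only [one_mul] at h3
      rw [h3, Complex.real_smul]
      push_cast
      ring
    have hρ0 : ρ 0 = r := by simp only [hρ]; simp [hr.le]
    have h1 := param_deriv σ (fun ω => Complex.I * X j ω) (fun ω => r * X i0 ω) (X j)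
      (by have := hXm j; fun_prop)
        (by have := hXm i0; fun_prop) (hXm _) (fun ω => by simpa using hX1 j ω) (hX1 _) 0
    simp only [hH1, zero_mul, add_zero] at h1
    have h2 : HasDerivAt (fun s : ℝ => g1 (ρ s) / ρ s) _ 0 :=
      ((hg1d (ρ 0)).scomp 0 (hρd 0)).div (hρd 0).ofReal_comp (by exact_mod_cast (hρpos 0).ne')
    have h3 := ((hasDerivAt_id (0:ℝ)).ofReal_comp).mul h2
    have h4 := h1.unique h3
    simp only [hY]
    rw [h4]
    simp [hρ0]
  refine ⟨g, g1, σ.real univ, measureReal_nonneg, hrad, hgd, ?_, ?_⟩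
  · intro r hr
    refine (hg1d r).congr_deriv ?_
    have h1 : ∑ j, Y j r = - g r := by
      simp only [hY, hg]
      rw [← integral_finsetSum _ (fun j _ => hIntg j r), ← integral_neg]
      congr 1
      funext ω
      rw [← Finset.sum_mul]
      have : ∑ j, (Complex.I * X j ω) * (Complex.I * X j ω) = -1 := by
        have h2 : ∀ j, (Complex.I * (X j ω : ℂ)) * (Complex.I * X j ω) = -((X j ω ^ 2 : ℝ) : ℂ) := fun j => by
          push_cast
          linear_combination (X j ω : ℂ) ^ 2 * Complex.I_sq
        simp only [h2]
        rw [Finset.sum_neg_distrib, ← Complex.ofReal_sum, hXsum]; simp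
      rw [this]; ring
    rw [← Finset.add_sum_erase _ _ (Finset.mem_univ i0),
      Finset.sum_congr rfl (fun j hj => hYj j (Finset.ne_of_mem_erase hj) r hr)] at h1
    rw [Finset.sum_const, Finset.card_erase_of_mem (Finset.mem_univ _), Finset.card_univ, Fintype.card_fin,
      nsmul_eq_mul, Nat.cast_sub hd] at h1
    push_cast at h1 ⊢
    linear_combination h1
  · intro r
    refine (norm_integral_le_integral_norm _).trans ?_
    simp only [hen]
    simp

end sphere_part

section polar_part

lemma polar_integral {d : ℕ} (hd : 1 ≤ d) (F : EuclideanSpace ℝ (Fin d) → ℂ) (hF : Integrable F) :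
    ∫ ξ, F ξ = ∫ r in Ioi (0 : ℝ), ((r ^ (d - 1) : ℝ) : ℂ) *
      ∫ ω : Metric.sphere (0 : EuclideanSpace ℝ (Fin d)) 1, F (r • (ω : EuclideanSpace ℝ (Fin d)))
        ∂(volume : Measure (EuclideanSpace ℝ (Fin d))).toSphere := by
  have : Nonempty (Fin d) := ⟨⟨0, hd⟩⟩
  set μ := (volume : Measure (EuclideanSpace ℝ (Fin d))) with hμ
  have hdim : Module.finrank ℝ (EuclideanSpace ℝ (Fin d)) = d := by simp
  set G : Metric.sphere (0 : EuclideanSpace ℝ (Fin d)) 1 × Ioi (0 : ℝ) → ℂ :=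
    fun p => F ((p.2 : ℝ) • (p.1 : EuclideanSpace ℝ (Fin d))) with hG
  have hGF : ∀ ξ : ({0}ᶜ : Set (EuclideanSpace ℝ (Fin d))), G (homeomorphUnitSphereProd _ ξ) = F ξ := by
    intro ξ
    simp only [hG]
    congr 1
    have h0 : ‖(ξ : EuclideanSpace ℝ (Fin d))‖ ≠ 0 := norm_ne_zero_iff.2 ξ.2
    simp only [homeomorphUnitSphereProd_apply_snd_coe, homeomorphUnitSphereProd_apply_fst_coe]
    rw [smul_smul, mul_inv_cancel₀ h0, one_smul]
  have hmp := μ.measurePreserving_homeomorphUnitSphereProd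
  have hemb := (homeomorphUnitSphereProd (EuclideanSpace ℝ (Fin d))).measurableEmbedding
  have h1 : ∫ ξ, F ξ ∂μ = ∫ p, G p ∂μ.toSphere.prod (.volumeIoiPow (d - 1)) := by
    have h2 := hmp.integral_comp hemb G
    simp only [hGF, hdim] at h2
    rw [← h2, integral_subtype_comap (measurableSet_singleton _).compl F, restrict_compl_singleton]
  have hGi : Integrable G (μ.toSphere.prod (.volumeIoiPow (d - 1))) := by
    have h2 := hmp.integrable_comp_emb hemb (g := G)
    simp only [hdim] at h2
    rw [← h2]
    have h3 : G ∘ homeomorphUnitSphereProd (EuclideanSpace ℝ (Fin d)) = F ∘ Subtype.val := funext hGF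
    rw [h3, ← integrableOn_iff_comap_subtypeVal (by measurability), IntegrableOn, restrict_compl_singleton]
    exact hF
  rw [h1, integral_prod_symm _ hGi]
  simp only [Measure.volumeIoiPow, ENNReal.ofReal]
  rw [integral_withDensity_eq_integral_smul]
  · simp only [hG]
    rw [integral_subtype_comap measurableSet_Ioi fun a : ℝ ↦ Real.toNNReal (a ^ (d - 1)) •
      ∫ ω : Metric.sphere (0 : EuclideanSpace ℝ (Fin d)) 1, F (a • (ω : EuclideanSpace ℝ (Fin d))) ∂μ.toSphere]
    refine setIntegral_congr_fun measurableSet_Ioi fun x hx ↦ ?_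
    rw [NNReal.smul_def, Real.coe_toNNReal _ (pow_nonneg hx.out.le _), Complex.real_smul]
  · exact (measurable_subtype_coe.pow_const _).real_toNNReal

lemma tsum_low (φ : ℝ → ℝ) (hφsupp : Function.support φ ⊆ Set.Ioo (1/2 : ℝ) 2)
    (hφsum : ∀ r : ℝ, 0 < r → (∑' k : ℤ, φ ((2 : ℝ) ^ (-k) * r)) = 1) (N : ℤ) (r : ℝ) (hr : 0 < r)
    (hrN : r ≤ 2 ^ N) :
    (∑' k : ℤ, if k ≤ N then φ ((2 : ℝ) ^ (-k) * r) else 0) = 1 := by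
  rw [← hφsum r hr]
  congr 1
  funext k
  split_ifs with h
  · rfl
  · symm
    by_contra hne
    have h1 := (hφsupp hne).1
    push Not at h
    have h2 : (2 : ℝ) ^ (-k) * r ≤ 2 ^ (-k) * 2 ^ N := by gcongr
    rw [← zpow_add₀ (by norm_num)] at h2
    have h3 : (2 : ℝ) ^ (-k + N) ≤ 2 ^ (-1 : ℤ) := zpow_le_zpow_right₀ (by norm_num) (by omega)
    norm_num at h3
    linarith

lemma tsum_high (φ : ℝ → ℝ) (hφsupp : Function.support φ ⊆ Set.Ioo (1/2 : ℝ) 2)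
    (N : ℤ) (r : ℝ) (hrN : 2 ^ N < r) :
    (∑' k : ℤ, if k ≤ N then φ ((2 : ℝ) ^ (-k) * r) else 0) = φ (r / 2 ^ N) := by
  rw [tsum_eq_single N]
  · rw [if_pos le_rfl, zpow_neg]; congr 1; field_simp
  · intro k hk
    split_ifs with h
    · by_contra hne
      have h1 := (hφsupp hne).2
      have h2 : (2 : ℝ) ^ (-k) * 2 ^ N < 2 ^ (-k) * r := by gcongr
      rw [← zpow_add₀ (by norm_num)] at h2
      have h3 : (2 : ℝ) ^ (1 : ℤ) ≤ 2 ^ (-k + N) := zpow_le_zpow_right₀ (by norm_num) (by omega)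
      norm_num at h3
      linarith
    · rfl

end polar_part

lemma cutoff_bounds (φ : ℝ → ℝ) (hφ : ContDiff ℝ (⊤ : ℕ∞) φ)
    (hφsupp : Function.support φ ⊆ Set.Ioo (1/2 : ℝ) 2) :
    ∃ W : ℝ, 1 ≤ W ∧ (∀ y, |φ y| ≤ W) ∧ (∀ y, |y * deriv φ y| ≤ W) := by
  have hcs : HasCompactSupport φ :=
    HasCompactSupport.of_support_subset_isCompact (isCompact_Icc (a := (1/2 : ℝ)) (b := 2))
      (hφsupp.trans Ioo_subset_Icc_self)
  have hcd : Continuous (deriv φ) := hφ.continuous_deriv (by exact_mod_cast le_top)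
  obtain ⟨A, hA⟩ := hcs.exists_bound_of_continuous hφ.continuous
  have hcs2 : HasCompactSupport (fun y => y * deriv φ y) := hcs.deriv.mul_left
  obtain ⟨B, hB⟩ := hcs2.exists_bound_of_continuous (continuous_id.mul hcd)
  refine ⟨max 1 (max A B), le_max_left _ _, fun y => ?_, fun y => ?_⟩
  · exact (hA y).trans ((le_max_left _ _).trans (le_max_right _ _))
  · exact (hB y).trans ((le_max_right _ _).trans (le_max_right _ _))

lemma half_line_bound (m : ℝ) (k C W : ℝ) (g : ℝ → ℂ) (hW : 1 ≤ W)
    (hC : ∀ (w w' : ℝ → ℝ) (t : ℝ), (∀ r, HasDerivAt w (w' r) r) → Continuous w' →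
      (∀ r, 0 < r → |w r| ≤ W) → (∀ r, 0 < r → |w' r| ≤ W / r) → ∀ a b, 0 ≤ a → a ≤ b →
      IntervalIntegrable (fun r : ℝ => ((r ^ (k - 1/2) * w r : ℝ) : ℂ) * Complex.exp (Complex.I * ((t * r ^ m : ℝ) : ℂ)) * g r) volume a b ∧
      ‖∫ r in a..b, ((r ^ (k - 1/2) * w r : ℝ) : ℂ) * Complex.exp (Complex.I * ((t * r ^ m : ℝ) : ℂ)) * g r‖ ≤ C)
    (φ : ℝ → ℝ) (hφ : ContDiff ℝ (⊤ : ℕ∞) φ) (hφsupp : Function.support φ ⊆ Set.Ioo (1/2 : ℝ) 2)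
    (hW1 : ∀ y, |φ y| ≤ W) (hW2 : ∀ y, |y * deriv φ y| ≤ W)
    (R : ℝ) (hR : 0 < R) (Ψ : ℝ → ℝ) (h1 : ∀ s, 0 < s → s ≤ R → Ψ s = 1)
    (h2 : ∀ s, R < s → Ψ s = φ (s / R)) (t : ℝ) :
    ‖∫ r in Ioi (0 : ℝ), ((r ^ (k - 1/2) * Ψ r : ℝ) : ℂ) * Complex.exp (Complex.I * ((t * r ^ m : ℝ) : ℂ)) * g r‖
      ≤ C + C := by
  set G : ℝ → ℂ := fun r => ((r ^ (k - 1/2) * Ψ r : ℝ) : ℂ) * Complex.exp (Complex.I * ((t * r ^ m : ℝ) : ℂ)) * g r with hG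
  have hz : ∀ s, 2 * R < s → G s = 0 := by
    intro s hs
    have : φ (s / R) = 0 := by
      by_contra hne
      have := (hφsupp hne).2
      rw [div_lt_iff₀ hR] at this
      linarith
    simp only [hG]
    rw [h2 s (by linarith), this]; simp
  obtain ⟨i1, b1⟩ := hC (fun _ => 1) (fun _ => 0) t (fun r => hasDerivAt_const _ _) continuous_const
    (fun r _ => by simpa using hW) (fun r hr => by simp; positivity) 0 R le_rfl hR.le
  obtain ⟨i2, b2⟩ := hC (fun s => φ (s / R)) (fun s => deriv φ (s / R) / R) t
    (fun r => by
      have h3 : HasDerivAt φ (deriv φ (r / R)) (r / R) :=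
        (hφ.differentiable (by simp)).differentiableAt.hasDerivAt
      refine (h3.comp r ((hasDerivAt_id r).div_const R)).congr_deriv ?_
      ring)
    (((hφ.continuous_deriv (by exact_mod_cast le_top)).comp (continuous_id.div_const R)).div_const R)
    (fun r _ => hW1 _)
    (fun r hr => by
      rw [le_div_iff₀ hr]
      refine le_of_eq_of_le ?_ (hW2 (r / R))
      rw [abs_div, abs_mul, abs_div, abs_of_pos hr, abs_of_pos hR]; ring)
    R (2 * R) hR.le (by linarith)
  have e1 : ∀ s ∈ Set.uIoc 0 R, ((s ^ (k - 1/2) * (fun _ => (1:ℝ)) s : ℝ) : ℂ) * Complex.exp (Complex.I * ((t * s ^ m : ℝ) : ℂ)) * g s = G s := by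
    intro s hs
    rw [uIoc_of_le hR.le] at hs
    simp only [hG]
    rw [h1 s hs.1 hs.2]
  have e2 : ∀ s ∈ Set.uIoc R (2 * R), ((s ^ (k - 1/2) * (fun s => φ (s / R)) s : ℝ) : ℂ) * Complex.exp (Complex.I * ((t * s ^ m : ℝ) : ℂ)) * g s = G s := by
    intro s hs
    rw [uIoc_of_le (by linarith)] at hs
    simp only [hG]
    rw [h2 s hs.1]
  have j1 : IntervalIntegrable G volume 0 R := i1.congr e1
  have j2 : IntervalIntegrable G volume R (2 * R) := i2.congr e2
  have hs : ∫ r in Ioi (0 : ℝ), G r = ∫ r in Ioc 0 (2 * R), G r := by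
    refine setIntegral_eq_of_subset_of_forall_sdiff_eq_zero measurableSet_Ioi Ioc_subset_Ioi_self ?_
    intro s hs
    refine hz s ?_
    by_contra hle
    exact hs.2 ⟨hs.1, not_lt.1 hle⟩
  rw [hs, ← intervalIntegral.integral_of_le (by linarith), ← intervalIntegral.integral_add_adjacent_intervals j1 j2]
  refine (norm_add_le _ _).trans (add_le_add ?_ ?_)
  · rw [← intervalIntegral.integral_congr_ae (Filter.Eventually.of_forall e1)]
    exact b1
  · rw [← intervalIntegral.integral_congr_ae (Filter.Eventually.of_forall e2)]
    exact b2

theorem statement5 (d : ℕ) (hd : 1 ≤ d) (m : ℝ) (hm : 1 < m)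
    (φ : ℝ → ℝ) (hφ : ContDiff ℝ (⊤ : ℕ∞) φ) (hφsupp : Function.support φ ⊆ Set.Ioo (1/2 : ℝ) 2)
    (hφsum : ∀ r : ℝ, 0 < r → (∑' k : ℤ, φ ((2 : ℝ) ^ (-k) * r)) = 1) :
    ∃ C : ℝ, 0 < C ∧
      ∀ (N : ℤ) (t : ℝ) (x : EuclideanSpace ℝ (Fin d)), x ≠ 0 →
        ‖∫ ξ : EuclideanSpace ℝ (Fin d),
            Complex.exp (Complex.I * ((⟪x, ξ⟫ + t * ‖ξ‖ ^ m : ℝ) : ℂ)) *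
              ((∑' k : ℤ, if k ≤ N then φ ((2 : ℝ) ^ (-k) * ‖ξ‖) else 0) / ‖ξ‖ ^ ((d : ℝ) / 2) : ℝ)‖
          ≤ C * ‖x‖ ^ (-(d : ℝ) / 2) := by
  obtain ⟨g, g1, S, hS, hrad, hg, hg1, hgb⟩ := sphere_ode hd
  obtain ⟨W, hW, hW1, hW2⟩ := cutoff_bounds φ hφ hφsupp
  have hd1 : (1 : ℝ) ≤ d := by exact_mod_cast hd
  obtain ⟨C, hC0, hC⟩ := radial_bound m hm (((d : ℝ) - 1) / 2) (by linarith) g g1 S W hS (by linarith) hg hg1 hgb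
  refine ⟨C + C + 1, by linarith, ?_⟩
  intro N t x hx
  set ρ := ‖x‖ with hρ
  have hρ0 : 0 < ρ := norm_pos_iff.2 hx
  set ψ : ℝ → ℝ := fun r => ∑' k : ℤ, if k ≤ N then φ ((2 : ℝ) ^ (-k) * r) else 0 with hψ
  set F : EuclideanSpace ℝ (Fin d) → ℂ := fun ξ =>
    Complex.exp (Complex.I * ((⟪x, ξ⟫ + t * ‖ξ‖ ^ m : ℝ) : ℂ)) * ((ψ ‖ξ‖) / ‖ξ‖ ^ ((d : ℝ) / 2) : ℝ) with hF
  change ‖∫ ξ, F ξ‖ ≤ _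
  by_cases hFi : Integrable F
  swap
  · rw [integral_undef hFi, norm_zero]; positivity
  have h2N : (0 : ℝ) < 2 ^ N := by positivity
  have key := half_line_bound m (((d : ℝ) - 1) / 2) C W g hW hC φ hφ hφsupp hW1 hW2 (2 ^ N * ρ) (by positivity)
    (fun s => ψ (s / ρ))
    (fun s hs hsR => tsum_low φ hφsupp hφsum N (s / ρ) (by positivity) (by rwa [div_le_iff₀ hρ0]))
    (fun s hs => by
      have := tsum_high φ hφsupp N (s / ρ) (by rwa [lt_div_iff₀ hρ0])
      simp only [hψ]
      rw [this, div_div, mul_comm ρ])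
    (t * ρ ^ (-m))
  set G : ℝ → ℂ := fun r => ((r ^ (((d : ℝ) - 1) / 2 - 1/2) * ψ (r / ρ) : ℝ) : ℂ) *
    Complex.exp (Complex.I * ((t * ρ ^ (-m) * r ^ m : ℝ) : ℂ)) * g r with hG
  have hIntg : ∀ r ∈ Ioi (0 : ℝ), ((r ^ (d - 1) : ℝ) : ℂ) *
      ∫ ω : Metric.sphere (0 : EuclideanSpace ℝ (Fin d)) 1, F (r • (ω : EuclideanSpace ℝ (Fin d)))
        ∂(volume : Measure (EuclideanSpace ℝ (Fin d))).toSphere = ((ρ ^ (1 - (d : ℝ) / 2) : ℝ) : ℂ) * G (ρ * r) := by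
    intro r hr
    have hr0 : 0 < r := hr
    have hf : ∀ ω : Metric.sphere (0 : EuclideanSpace ℝ (Fin d)) 1, F (r • (ω : EuclideanSpace ℝ (Fin d))) =
        (Complex.exp (Complex.I * ((t * r ^ m : ℝ) : ℂ)) * ((ψ r / r ^ ((d : ℝ) / 2) : ℝ) : ℂ)) *
          Complex.exp (Complex.I * ((⟪r • x, (ω : EuclideanSpace ℝ (Fin d))⟫ : ℝ) : ℂ)) := by
      intro ω
      have hn : ‖r • (ω : EuclideanSpace ℝ (Fin d))‖ = r := by
        rw [norm_smul, norm_eq_of_mem_sphere ω, mul_one, Real.norm_of_nonneg hr0.le]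
      simp only [hF]
      rw [hn, inner_smul_right, real_inner_smul_left, Complex.ofReal_add, mul_add, Complex.exp_add]
      ring
    simp only [hf]
    rw [integral_const_mul]
    have h3 : ∫ ω : Metric.sphere (0 : EuclideanSpace ℝ (Fin d)) 1,
        Complex.exp (Complex.I * ((⟪r • x, (ω : EuclideanSpace ℝ (Fin d))⟫ : ℝ) : ℂ))
        ∂(volume : Measure (EuclideanSpace ℝ (Fin d))).toSphere = g (ρ * r) := by
      have := hrad (r • x)
      rw [norm_smul, Real.norm_of_nonneg hr0.le, mul_comm] at this
      exact this
    rw [h3]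
    simp only [hG]
    have e1 : t * ρ ^ (-m) * (ρ * r) ^ m = t * r ^ m := by
      rw [Real.mul_rpow hρ0.le hr0.le, Real.rpow_neg hρ0.le]
      have : ρ ^ m ≠ 0 := (Real.rpow_pos_of_pos hρ0 m).ne'
      field_simp
    have e2 : ρ * r / ρ = r := by field_simp
    have e3 : ρ ^ (1 - (d : ℝ) / 2) * (ρ * r) ^ (((d : ℝ) - 1) / 2 - 1/2) = r ^ (d - 1) / r ^ ((d : ℝ) / 2) := by
      rw [Real.mul_rpow hρ0.le hr0.le, ← mul_assoc, ← Real.rpow_add hρ0, ← Real.rpow_natCast, ← Real.rpow_sub hr0,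
        Nat.cast_sub hd]
      have a1 : 1 - (d : ℝ) / 2 + (((d : ℝ) - 1) / 2 - 1/2) = 0 := by ring
      rw [a1, Real.rpow_zero, one_mul]
      congr 1
      push_cast; ring
    rw [e1, e2]
    have e4 : ((ρ ^ (1 - (d : ℝ) / 2) : ℝ) : ℂ) * ((ρ * r) ^ (((d : ℝ) - 1) / 2 - 1/2) : ℝ) = ((r ^ (d - 1) : ℝ) : ℂ) / (r ^ ((d : ℝ) / 2) : ℝ) := by
      exact_mod_cast congrArg (fun z : ℝ => (z : ℂ)) e3
    rw [Complex.ofReal_mul ((ρ * r) ^ (((d : ℝ) - 1) / 2 - 1/2)) (ψ r), Complex.ofReal_div]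
    generalize Complex.exp (Complex.I * ((t * r ^ m : ℝ) : ℂ)) = E
    linear_combination (-(E * (ψ r : ℂ) * g (ρ * r))) * e4
  rw [polar_integral hd F hFi, setIntegral_congr_fun measurableSet_Ioi hIntg, integral_const_mul,
    integral_comp_mul_left_Ioi G 0 hρ0, mul_zero, norm_mul, norm_smul, Complex.norm_real,
    Real.norm_of_nonneg (by positivity), Real.norm_of_nonneg (by positivity), ← mul_assoc]
  have e5 : ρ ^ (1 - (d : ℝ) / 2) * ρ⁻¹ = ρ ^ (-(d : ℝ) / 2) := by
    rw [← Real.rpow_neg_one, ← Real.rpow_add hρ0]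
    congr 1
    ring
  rw [e5, mul_comm]
  have : 0 ≤ ρ ^ (-(d : ℝ) / 2) := by positivity
  exact mul_le_mul_of_nonneg_right (key.trans (by linarith)) this
end

section
/- Let $d \ge 1$, $0 < \lambda < d$, $1 < p_1, p_2 < \infty$, $1 \le a \le \infty$ with $\frac{1}{p_1} + \frac{1}{p_2} + \frac{\lambda}{d} = 2$. Then $\big| \iint_{\mathbb{R}^d \times \mathbb{R}^d} f(x) g(y) |x-y|^{-\lambda} \, dx\, dy \big| \lesssim \|f\|_{L^{p_1,a}} \|g\|_{L^{p_2,a'}}$ for all $f \in L^{p_1,a}(\mathbb{R}^d)$ and $g \in L^{p_2,a'}(\mathbb{R}^d)$, where $a'$ is the Hölder conjugate of $a$. -/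
open MeasureTheory Set
open scoped ENNReal NNReal

/-- The Lorentz `L^{p,a}`-(quasi)norm of an `ℝ≥0∞`-valued function, defined through the
distribution function (for `a < ∞` via the layer-cake formula, for `a = ∞` as the weak
quasinorm, and `L^{∞,·} = L^∞`). -/
noncomputable def lorentzNorm {α : Type*} [MeasurableSpace α] (μ : Measure α)
    (f : α → ℝ≥0∞) (p a : ℝ≥0∞) : ℝ≥0∞ :=
  if p = ∞ then essSup f μ
  else if a = ∞ then ⨆ s : ℝ≥0, (s : ℝ≥0∞) * (μ {x | (s : ℝ≥0∞) < f x}) ^ (1 / p.toReal)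
  else (∫⁻ s in Set.Ioi (0 : ℝ),
      ENNReal.ofReal s ^ (a.toReal - 1) *
        (μ {x | ENNReal.ofReal s < f x}) ^ (a.toReal / p.toReal)) ^ (1 / a.toReal)


theorem on_gen {X Y : Type*} [MeasurableSpace X] [MeasurableSpace Y] (μ : Measure X) (ν : Measure Y)
    [SFinite μ] [SFinite ν] (S : Set (Y × X)) (hS : MeasurableSet S) (H : X → ℝ≥0∞)
    (hH : Measurable H) :
    ∫⁻ s, ∫⁻ x in {x | (s, x) ∈ S}, H x ∂μ ∂ν = ∫⁻ x, ν {s | (s, x) ∈ S} * H x ∂μ := by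
  have h1 : ∀ s, ∫⁻ x in {x | (s, x) ∈ S}, H x ∂μ
      = ∫⁻ x, S.indicator (fun z => H z.2) (s, x) ∂μ := by
    intro s
    have hs : MeasurableSet {x | (s, x) ∈ S} := measurable_prodMk_left hS
    rw [← lintegral_indicator hs]
    rfl
  have hm : Measurable (S.indicator (fun z : Y × X => H z.2)) :=
    (hH.comp measurable_snd).indicator hS
  simp_rw [h1]
  rw [lintegral_lintegral_swap (f := fun s x => S.indicator (fun z => H z.2) (s, x)) hm.aemeasurable]
  refine lintegral_congr fun x => ?_
  have hs : MeasurableSet {s | (s, x) ∈ S} := measurable_prodMk_right hS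
  have : ∀ s, S.indicator (fun z => H z.2) (s, x) = ({s | (s, x) ∈ S}).indicator (fun _ => H x) s :=
    fun s => rfl
  simp_rw [this]
  rw [lintegral_indicator_const hs, mul_comm]

theorem on_gen2 {A B X Y : Type*} [MeasurableSpace A] [MeasurableSpace B]
    [MeasurableSpace X] [MeasurableSpace Y] (μ : Measure X) (μ' : Measure Y) (ν : Measure A)
    (ν' : Measure B)
    [SFinite μ] [SFinite ν] [SFinite μ'] [SFinite ν'] (S : Set (A × X)) (hS : MeasurableSet S)
    (T : Set (B × Y)) (hT : MeasurableSet T) (k : X → Y → ℝ≥0∞)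
    (hk : Measurable (Function.uncurry k)) :
    ∫⁻ s, ∫⁻ t, ∫⁻ x in {x | (s, x) ∈ S}, ∫⁻ y in {y | (t, y) ∈ T}, k x y ∂μ' ∂μ ∂ν' ∂ν
      = ∫⁻ x, ∫⁻ y, ν {s | (s, x) ∈ S} * ν' {t | (t, y) ∈ T} * k x y ∂μ' ∂μ := by
  have hkx : ∀ x, Measurable (k x) := fun x => hk.comp measurable_prodMk_left
  have hTm : Measurable (fun y => ν' {t | (t, y) ∈ T}) := measurable_measure_prodMk_right hT
  have h1 : ∀ t x, ∫⁻ y in {y | (t, y) ∈ T}, k x y ∂μ' =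
      ∫⁻ y, T.indicator (fun z => k x z.2) (t, y) ∂μ' := by
    intro t x
    have hs : MeasurableSet {y | (t, y) ∈ T} := measurable_prodMk_left hT
    rw [← lintegral_indicator hs]
    rfl
  have hm : Measurable (Function.uncurry
      (fun (t : B) (x : X) => ∫⁻ y in {y | (t, y) ∈ T}, k x y ∂μ')) := by
    have : Measurable (fun q : (B × X) × Y =>
        ({q : (B × X) × Y | (q.1.1, q.2) ∈ T}).indicator (fun q => k q.1.2 q.2) q) := by
      refine Measurable.indicator ?_ ?_
      · exact hk.comp ((measurable_snd.comp measurable_fst).prodMk measurable_snd)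
      · exact ((measurable_fst.comp measurable_fst).prodMk measurable_snd) hT
    have h2 := this.lintegral_prod_right' (ν := μ')
    convert h2 using 2 with q
    simp only [Function.uncurry]
    rw [h1]
    rfl
  have h3 : ∀ s, ∫⁻ t, ∫⁻ x in {x | (s, x) ∈ S}, ∫⁻ y in {y | (t, y) ∈ T}, k x y ∂μ' ∂μ ∂ν'
      = ∫⁻ x in {x | (s, x) ∈ S}, ∫⁻ y, ν' {t | (t, y) ∈ T} * k x y ∂μ' ∂μ := by
    intro s
    rw [lintegral_lintegral_swap hm.aemeasurable]
    refine lintegral_congr fun x => ?_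
    exact on_gen μ' ν' T hT (k x) (hkx x)
  simp_rw [h3]
  rw [on_gen μ ν S hS]
  · refine lintegral_congr fun x => ?_
    simp_rw [mul_assoc]
    exact (lintegral_const_mul _ (hTm.mul (hkx x))).symm
  · refine Measurable.lintegral_prod_right' (f := fun q : X × Y => ν' {t | (t, q.2) ∈ T} * k q.1 q.2) ?_
    exact (hTm.comp measurable_snd).mul hk

/-- measurable majorant with the same distribution function -/
theorem on_majorant {X : Type*} [MeasurableSpace X] (μ : Measure X) [SFinite μ] (f : X → ℝ≥0∞) :
    ∃ F : X → ℝ≥0∞, Measurable F ∧ f ≤ F ∧ ∀ t, μ {x | t < F x} = μ {x | t < f x} := by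
  obtain ⟨D, hDc, hD⟩ := TopologicalSpace.exists_countable_dense ℝ≥0∞
  have := hDc.to_subtype
  refine ⟨fun x => ⨆ q : D, (toMeasurable μ {x | (q : ℝ≥0∞) < f x}).indicator (fun _ => (q : ℝ≥0∞)) x,
    ?_, ?_, ?_⟩
  · exact Measurable.iSup fun q => measurable_const.indicator (measurableSet_toMeasurable _ _)
  · intro x
    refine le_of_forall_lt fun c hc => ?_
    obtain ⟨q, hq, hcq, hqf⟩ := hD.exists_between hc
    refine lt_of_lt_of_le hcq ?_
    refine le_iSup_of_le ⟨q, hq⟩ ?_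
    rw [indicator_of_mem]
    exact subset_toMeasurable _ _ hqf
  · intro t
    have e1 : {x | t < ⨆ q : D, (toMeasurable μ {x | (q : ℝ≥0∞) < f x}).indicator (fun _ => (q : ℝ≥0∞)) x}
        = ⋃ q : {q : D // t < q}, toMeasurable μ {x | ((q : D) : ℝ≥0∞) < f x} := by
      ext x
      simp only [mem_ofPred_eq, lt_iSup_iff, mem_iUnion]
      constructor
      · rintro ⟨q, hq⟩
        by_cases hx : x ∈ toMeasurable μ {x | (q : ℝ≥0∞) < f x}
        · rw [indicator_of_mem hx] at hq
          exact ⟨⟨q, hq⟩, hx⟩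
        · rw [indicator_of_notMem hx] at hq
          exact absurd hq not_lt_zero
      · rintro ⟨⟨q, hq⟩, hx⟩
        refine ⟨q, ?_⟩
        rw [indicator_of_mem hx]
        exact hq
    have e2 : {x | t < f x} = ⋃ q : {q : D // t < q}, {x | ((q : D) : ℝ≥0∞) < f x} := by
      ext x
      simp only [mem_ofPred_eq, mem_iUnion]
      constructor
      · intro h
        obtain ⟨q, hq, hcq, hqf⟩ := hD.exists_between h
        exact ⟨⟨⟨q, hq⟩, hcq⟩, hqf⟩
      · rintro ⟨q, hq⟩
        exact q.2.trans hq
    rw [e1, e2, measure_iUnion_toMeasurable]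

theorem on_vol (c : ℝ≥0∞) : (volume.restrict (Ioi (0:ℝ))) {s | ENNReal.ofReal s < c} = c := by
  rw [Measure.restrict_apply (measurableSet_lt ENNReal.measurable_ofReal measurable_const)]
  rcases eq_or_ne c ∞ with rfl | hc
  · simp
  · have : {s | ENNReal.ofReal s < c} ∩ Ioi (0:ℝ) = Ioo 0 c.toReal := by
      ext s
      simp only [mem_inter_iff, mem_ofPred_eq, mem_Ioi, mem_Ioo]
      constructor
      · rintro ⟨h, h0⟩
        exact ⟨h0, (ENNReal.ofReal_lt_iff_lt_toReal h0.le hc).1 h⟩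
      · rintro ⟨h0, h⟩
        exact ⟨(ENNReal.ofReal_lt_iff_lt_toReal h0.le hc).2 h, h0⟩
    rw [this, Real.volume_Ioo, sub_zero, ENNReal.ofReal_toReal hc]

theorem on_pow_Ioc {r b : ℝ} (hr : -1 < r) (hb : 0 ≤ b) :
    ∫⁻ x in Ioc 0 b, ENNReal.ofReal x ^ r = ENNReal.ofReal (1 / (r + 1)) * ENNReal.ofReal b ^ (r + 1) := by
  have h1 : ∫⁻ x in Ioc 0 b, ENNReal.ofReal x ^ r = ∫⁻ x in Ioc 0 b, ENNReal.ofReal (x ^ r) :=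
    setLIntegral_congr_fun measurableSet_Ioc fun x hx => ENNReal.ofReal_rpow_of_pos hx.1
  have hi : IntegrableOn (fun x : ℝ => x ^ r) (Ioc 0 b) :=
    (intervalIntegrable_iff_integrableOn_Ioc_of_le hb).1 (intervalIntegral.intervalIntegrable_rpow' hr)
  rw [h1, ← ofReal_integral_eq_lintegral_ofReal hi, ← intervalIntegral.integral_of_le hb,
    integral_rpow (Or.inl hr), Real.zero_rpow (by linarith), sub_zero,
    ENNReal.ofReal_rpow_of_nonneg hb (by linarith), ← ENNReal.ofReal_mul (by
      have : 0 < r + 1 := by linarith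
      positivity)]
  · congr 1; ring
  · filter_upwards [ae_restrict_mem measurableSet_Ioc] with x hx
    exact Real.rpow_nonneg hx.1.le _

theorem on_pow_Ioi {r c : ℝ} (hr : r < -1) (hc : 0 < c) :
    ∫⁻ x in Ioi c, ENNReal.ofReal x ^ r = ENNReal.ofReal (1 / (-r - 1)) * ENNReal.ofReal c ^ (r + 1) := by
  have h1 : ∫⁻ x in Ioi c, ENNReal.ofReal x ^ r = ∫⁻ x in Ioi c, ENNReal.ofReal (x ^ r) :=
    setLIntegral_congr_fun measurableSet_Ioi fun x hx => ENNReal.ofReal_rpow_of_pos (hc.trans hx)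
  have hi : IntegrableOn (fun x : ℝ => x ^ r) (Ioi c) := integrableOn_Ioi_rpow_of_lt hr hc
  rw [h1, ← ofReal_integral_eq_lintegral_ofReal hi, integral_Ioi_rpow_of_lt hr hc,
    ENNReal.ofReal_rpow_of_pos hc, ← ENNReal.ofReal_mul (by
      have : 0 < -r - 1 := by linarith
      positivity)]
  · congr 1
    have : -r - 1 = -(r+1) := by ring
    rw [this, neg_div, one_div, inv_neg]; ring
  · filter_upwards [ae_restrict_mem measurableSet_Ioi] with x hx
    exact Real.rpow_nonneg (hc.trans hx).le _

/-- potential of a set -/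
theorem on_potential {E : Type*} [NormedAddCommGroup E] [NormedSpace ℝ E] [FiniteDimensional ℝ E]
    [MeasurableSpace E] [BorelSpace E] [Nontrivial E] (μ : Measure E) [μ.IsAddHaarMeasure]
    (d : ℕ) (hdim : Module.finrank ℝ E = d)
    (lam : ℝ) (hlam0 : 0 < lam) (hlamd : lam < d) :
    ∃ C : ℝ, 0 < C ∧ ∀ (x : E) (B : Set E), MeasurableSet B →
      ∫⁻ y in B, ENNReal.ofReal (‖x - y‖ ^ (-lam)) ∂μ ≤ ENNReal.ofReal C * μ B ^ (1 - lam / d) := by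
  have hd0 : (0:ℝ) < d := hlam0.trans hlamd
  set w : ℝ≥0∞ := μ (Metric.ball 0 1) with hw
  have hwt : w ≠ ∞ := measure_ball_lt_top.ne
  set q : ℝ := d / lam with hq
  have hq1 : 1 < q := by rw [hq, one_lt_div hlam0]; exact hlamd
  refine ⟨1 + w.toReal * (1 / (q - 1)), by
    have : 0 < q - 1 := by linarith
    positivity, ?_⟩
  intro x B hB
  have hmeas : Measurable (fun y => ‖x - y‖ ^ (-lam)) := by fun_prop
  rw [lintegral_eq_lintegral_meas_lt _ (Filter.Eventually.of_forall fun y => by positivity)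
    hmeas.aemeasurable]
  have hθ : 0 < 1 - lam / d := by rw [sub_pos, div_lt_one hd0]; exact hlamd
  -- level set bound
  have hlev : ∀ t : ℝ, 0 < t → (μ.restrict B) {a | t < ‖x - a‖ ^ (-lam)} ≤
      w * ENNReal.ofReal t ^ (-q) := by
    intro t ht
    calc (μ.restrict B) {a | t < ‖x - a‖ ^ (-lam)} ≤ μ {a | t < ‖x - a‖ ^ (-lam)} :=
          Measure.restrict_apply_le _ _
      _ ≤ μ (Metric.closedBall x (t ^ (-1/lam))) := by
          refine measure_mono fun a ha => ?_
          rw [Metric.mem_closedBall, dist_comm, dist_eq_norm]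
          have ha' : t < ‖x - a‖ ^ (-lam) := ha
          rcases eq_or_lt_of_le (norm_nonneg (x - a)) with h0 | h0
          · rw [← h0]; positivity
          · have h := Real.rpow_le_rpow_of_nonpos ht ha'.le (z := -1/lam) (by
              rw [neg_div]; exact neg_nonpos.2 (by positivity))
            rw [← Real.rpow_mul h0.le] at h
            have e : -lam * (-1/lam) = 1 := by field_simp
            rwa [e, Real.rpow_one] at h
      _ = w * ENNReal.ofReal t ^ (-q) := by
          rw [Measure.addHaar_closedBall μ x (by positivity), hdim, mul_comm,
            ENNReal.ofReal_rpow_of_pos ht, ← Real.rpow_natCast, ← Real.rpow_mul ht.le]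
          congr 3
          rw [hq]; field_simp
  have hlev2 : ∀ t : ℝ, (μ.restrict B) {a | t < ‖x - a‖ ^ (-lam)} ≤ μ B := by
    intro t
    rw [← Measure.restrict_apply_univ B]
    exact measure_mono (subset_univ _)
  rcases eq_or_ne (μ B) 0 with h0 | h0
  · simp [Measure.restrict_eq_zero.2 h0]
  rcases eq_or_ne (μ B) ∞ with h1 | h1
  · rw [h1, ENNReal.top_rpow_of_pos hθ, ENNReal.mul_top]
    · exact le_top
    · rw [ne_eq, ENNReal.ofReal_eq_zero, not_le]
      have : 0 < q - 1 := by linarith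
      positivity
  set m := (μ B).toReal with hm
  have hm0 : 0 < m := ENNReal.toReal_pos h0 h1
  have hmB : μ B = ENNReal.ofReal m := (ENNReal.ofReal_toReal h1).symm
  set T : ℝ := m ^ (-(1/q)) with hT
  have hT0 : 0 < T := by positivity
  have hsplit : Ioi (0:ℝ) = Ioc 0 T ∪ Ioi T := (Ioc_union_Ioi_eq_Ioi hT0.le).symm
  rw [hsplit]
  have hqd : 1 / q = lam / d := by rw [hq]; field_simp
  calc _ ≤ _ := lintegral_union_le _ _ _
    _ ≤ (∫⁻ t in Ioc 0 T, ENNReal.ofReal m) + ∫⁻ t in Ioi T, w * ENNReal.ofReal t ^ (-q) := by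
        refine add_le_add ?_ ?_
        · exact lintegral_mono fun t => (hlev2 t).trans_eq hmB
        · exact setLIntegral_mono' measurableSet_Ioi fun t ht => hlev t (hT0.trans ht)
    _ = ENNReal.ofReal m * ENNReal.ofReal T +
        w * (ENNReal.ofReal (1 / (q - 1)) * ENNReal.ofReal T ^ (-q + 1)) := by
        rw [setLIntegral_const, Real.volume_Ioc, sub_zero, lintegral_const_mul' _ _ hwt,
          on_pow_Ioi (by linarith) hT0, neg_neg]
    _ = _ := by
        rw [hmB, ENNReal.ofReal_rpow_of_pos hT0, ENNReal.ofReal_rpow_of_pos hm0]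
        have e1 : m * T = m ^ (1 - lam / d) := by
          rw [hT, sub_eq_add_neg, Real.rpow_add hm0, Real.rpow_one, hqd]
        have e2 : T ^ (-q + 1) = m ^ (1 - lam / d) := by
          rw [hT, ← Real.rpow_mul hm0.le]
          congr 1
          rw [← hqd]
          field_simp
          ring
        rw [← ENNReal.ofReal_mul hm0.le, e1, e2]
        have : 0 < q - 1 := by linarith
        rw [ENNReal.ofReal_add (by norm_num) (by positivity), ENNReal.ofReal_mul (by positivity),
          ENNReal.ofReal_toReal hwt, ENNReal.ofReal_one]
        ring

/-- Lebesgue measure on the half line -/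
noncomputable def onNu : Measure ℝ := volume.restrict (Ioi (0:ℝ))

instance : SFinite onNu := by unfold onNu; infer_instance

theorem onNu_pos : ∀ᵐ x ∂onNu, 0 < x := ae_restrict_mem measurableSet_Ioi

/-- the majorizing kernel -/
noncomputable def onM (θ : ℝ) (x y : ℝ) : ℝ≥0∞ := ENNReal.ofReal (max x y) ^ (θ - 1)

theorem onM_meas (θ : ℝ) : Measurable (Function.uncurry (onM θ)) := by
  unfold onM Function.uncurry
  exact (ENNReal.measurable_ofReal.comp (measurable_fst.max measurable_snd)).pow_const _

theorem onM_comm (θ x y : ℝ) : onM θ x y = onM θ y x := by unfold onM; rw [max_comm]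

/-- decreasing rearrangement from the distribution function -/
noncomputable def onR (α : ℝ → ℝ≥0∞) (x : ℝ) : ℝ≥0∞ := onNu {s | ENNReal.ofReal x < α s}

theorem onR_anti (α : ℝ → ℝ≥0∞) : Antitone (onR α) := fun _ _ h =>
  measure_mono fun _ hs => (ENNReal.ofReal_le_ofReal h).trans_lt hs

theorem onR_meas (α : ℝ → ℝ≥0∞) : Measurable (onR α) := (onR_anti α).measurable

theorem on_lower {α : ℝ → ℝ≥0∞} (hα : Antitone α) {x r : ℝ}
    (h : ENNReal.ofReal r < onR α x) : ENNReal.ofReal x < α r := by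
  by_contra hc
  push Not at hc
  refine absurd h (not_lt.2 ?_)
  unfold onR onNu
  have hm : MeasurableSet {s | ENNReal.ofReal x < α s} :=
    measurableSet_lt measurable_const hα.measurable
  rw [Measure.restrict_apply hm]
  refine (measure_mono (t := Ioo 0 r) ?_).trans_eq (by rw [Real.volume_Ioo, sub_zero])
  rintro s ⟨hs, h0⟩
  refine ⟨h0, ?_⟩
  by_contra hsr
  push Not at hsr
  exact absurd (hs.trans_le ((hα hsr).trans hc)) (lt_irrefl _)

theorem on_top_aux {θ : ℝ} (hθ : 0 < θ) {β Ψ : ℝ≥0∞} (hβ : β ≠ 0)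
    (h : ∀ α' ≠ ∞, ∀ β' ≤ β, (max α' β') ^ (θ - 1) * (α' * β') ≤ Ψ) : Ψ = ∞ := by
  by_contra hΨ
  set b : ℝ≥0∞ := min β 1 with hb
  have hb0 : b ≠ 0 := by
    rw [hb]; exact (lt_min (pos_iff_ne_zero.2 hβ) one_pos).ne'
  have hb1 : b ≤ 1 := min_le_right _ _
  have hbt : b ≠ ∞ := (hb1.trans_lt ENNReal.one_lt_top).ne
  set r : ℝ≥0∞ := Ψ / b with hr
  have hrt : r ≠ ∞ := ENNReal.div_ne_top hΨ hb0
  set A : ℝ≥0∞ := max 1 ((r + 1) ^ (1 / θ)) with hA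
  have hAt : A ≠ ∞ := by
    rw [hA]
    refine (max_lt ENNReal.one_lt_top ?_).ne
    exact ENNReal.rpow_lt_top_of_nonneg (by positivity) (ENNReal.add_ne_top.2 ⟨hrt, ENNReal.one_ne_top⟩)
  have hA1 : 1 ≤ A := le_max_left _ _
  have hA0 : A ≠ 0 := (one_pos.trans_le hA1).ne'
  have h1 := h A hAt b (min_le_left _ _)
  rw [max_eq_left (hb1.trans hA1), ← mul_assoc] at h1
  have e : A ^ (θ - 1) * A = A ^ θ := by
    conv_lhs => rw [← ENNReal.rpow_one A, ← ENNReal.rpow_mul, ← ENNReal.rpow_add _ _ hA0 hAt]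
    congr 1; ring
  rw [e] at h1
  have h2 : A ^ θ ≤ r := (ENNReal.le_div_iff_mul_le (Or.inl hb0) (Or.inl hbt)).2 h1
  have h3 : r + 1 ≤ A ^ θ := by
    calc r + 1 = ((r + 1) ^ (1 / θ)) ^ θ := by
          rw [← ENNReal.rpow_mul, one_div, inv_mul_cancel₀ hθ.ne', ENNReal.rpow_one]
      _ ≤ A ^ θ := ENNReal.rpow_le_rpow (le_max_right _ _) hθ.le
  exact absurd (h3.trans h2) (not_le.2 (ENNReal.lt_add_right hrt one_ne_zero))

theorem on_Phi {θ : ℝ} (hθ : 0 < θ) (hθ1 : θ < 1) (α β : ℝ≥0∞) :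
    min (α * β ^ θ) (β * α ^ θ) ≤
      ∫⁻ x in {x | ENNReal.ofReal x < α}, ∫⁻ y in {y | ENNReal.ofReal y < β}, onM θ x y ∂onNu ∂onNu := by
  set Ψ := ∫⁻ x in {x | ENNReal.ofReal x < α}, ∫⁻ y in {y | ENNReal.ofReal y < β}, onM θ x y ∂onNu ∂onNu
    with hΨ
  have hms : ∀ c : ℝ≥0∞, MeasurableSet {x : ℝ | ENNReal.ofReal x < c} := fun c =>
    measurableSet_lt ENNReal.measurable_ofReal measurable_const
  have key : ∀ α' ≤ α, ∀ β' ≤ β, (max α' β') ^ (θ - 1) * (α' * β') ≤ Ψ := by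
    intro α' hα' β' hβ'
    calc (max α' β') ^ (θ - 1) * (α' * β')
        = ∫⁻ x in {x | ENNReal.ofReal x < α'}, ∫⁻ y in {y | ENNReal.ofReal y < β'},
            (max α' β') ^ (θ - 1) ∂onNu ∂onNu := by
          rw [setLIntegral_const, setLIntegral_const]
          unfold onNu
          rw [on_vol, on_vol]
          ring
      _ ≤ ∫⁻ x in {x | ENNReal.ofReal x < α'}, ∫⁻ y in {y | ENNReal.ofReal y < β'},
            onM θ x y ∂onNu ∂onNu := by
          refine setLIntegral_mono' (hms _) fun x hx => setLIntegral_mono' (hms _) fun y hy => ?_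
          unfold onM
          rw [show θ - 1 = -(1 - θ) by ring, ENNReal.rpow_neg, ENNReal.rpow_neg, ENNReal.inv_le_inv]
          refine ENNReal.rpow_le_rpow ?_ (by linarith)
          rw [ENNReal.ofReal_max]
          exact max_le_max (le_of_lt hx) (le_of_lt hy)
      _ ≤ Ψ := by
          refine lintegral_mono' (Measure.restrict_mono (fun x hx => lt_of_lt_of_le hx hα') le_rfl)
            fun x => lintegral_mono_set (fun x hx => lt_of_lt_of_le hx hβ')
  rcases eq_or_ne α 0 with rfl | hα0
  · simp
  rcases eq_or_ne β 0 with rfl | hβ0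
  · simp
  rcases eq_or_ne α ∞ with hα | hα
  · rw [on_top_aux (Ψ := Ψ) hθ hβ0 fun α' _ β' hβ' => key α' (by simp [hα]) β' hβ']
    exact le_top
  rcases eq_or_ne β ∞ with hβ | hβ
  · rw [on_top_aux (Ψ := Ψ) hθ hα0 fun β' _ α' hα' => by
      rw [max_comm, mul_comm β']; exact key α' hα' β' (by simp [hβ])]
    exact le_top
  refine le_trans ?_ (key α le_rfl β le_rfl)
  have e : ∀ c : ℝ≥0∞, c ≠ 0 → c ≠ ∞ → c ^ (θ - 1) * c = c ^ θ := by
    intro c h0 h1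
    conv_lhs => rw [← ENNReal.rpow_one c, ← ENNReal.rpow_mul, ← ENNReal.rpow_add _ _ h0 h1]
    congr 1; ring
  rcases le_total α β with h | h
  · rw [max_eq_right h, mul_comm α β, ← mul_assoc, e β hβ0 hβ, mul_comm]
    exact min_le_left _ _
  · rw [max_eq_left h, ← mul_assoc, e α hα0 hα, mul_comm (α ^ θ)]
    exact min_le_right _ _

theorem on_kernel {θ b₁ b₂ : ℝ} (h1 : b₁ < 1) (h2 : b₂ < 1) (hb : b₁ + b₂ = 1 + θ) {x : ℝ} (hx : 0 < x) :
    ∫⁻ y, ENNReal.ofReal y ^ (-b₂) * onM θ x y ∂onNu ≤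
      ENNReal.ofReal (1 / (1 - b₂) + 1 / (1 - b₁)) * ENNReal.ofReal x ^ (b₁ - 1) := by
  have hX0 : ENNReal.ofReal x ≠ 0 := by simpa using hx
  have hXt : ENNReal.ofReal x ≠ ∞ := ENNReal.ofReal_ne_top
  unfold onNu
  rw [← Ioc_union_Ioi_eq_Ioi hx.le]
  refine (lintegral_union_le _ _ _).trans ?_
  have p1 : 0 < 1 - b₂ := by linarith
  have p2 : 0 < 1 - b₁ := by linarith
  rw [ENNReal.ofReal_add (by positivity) (by positivity), add_mul]
  refine le_of_eq ?_
  congr 1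
  · have : ∫⁻ y in Ioc 0 x, ENNReal.ofReal y ^ (-b₂) * onM θ x y =
        ∫⁻ y in Ioc 0 x, ENNReal.ofReal y ^ (-b₂) * ENNReal.ofReal x ^ (θ - 1) :=
      setLIntegral_congr_fun measurableSet_Ioc fun y hy => by
        simp only [onM]; rw [max_eq_left hy.2]
    rw [this, lintegral_mul_const _ (ENNReal.measurable_ofReal.pow_const _),
      on_pow_Ioc (by linarith) hx.le, mul_assoc, ← ENNReal.rpow_add _ _ hX0 hXt]
    rw [show -b₂ + 1 + (θ - 1) = b₁ - 1 by linarith, show -b₂ + 1 = 1 - b₂ by ring]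
  · have : ∫⁻ y in Ioi x, ENNReal.ofReal y ^ (-b₂) * onM θ x y =
        ∫⁻ y in Ioi x, ENNReal.ofReal y ^ (-b₂ + (θ - 1)) :=
      setLIntegral_congr_fun measurableSet_Ioi fun y hy => by
        have hy' : x < y := hy
        simp only [onM]
        rw [max_eq_right hy'.le, ENNReal.rpow_add _ _ (by simpa using hx.trans hy')
          ENNReal.ofReal_ne_top]
    rw [this, on_pow_Ioi (by linarith) hx]
    rw [show -b₂ + (θ - 1) + 1 = b₁ - 1 by linarith, show -(-b₂ + (θ - 1)) - 1 = 1 - b₁ by linarith]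

theorem on_trunc {r : ℝ} (hr : -1 < r) (c : ℝ≥0∞) :
    ∫⁻ x in {x | ENNReal.ofReal x < c}, ENNReal.ofReal x ^ r ∂onNu ≤
      ENNReal.ofReal (1 / (r + 1)) * c ^ (r + 1) := by
  have hr' : 0 < r + 1 := by linarith
  rcases eq_or_ne c ∞ with rfl | hc
  · rw [ENNReal.top_rpow_of_pos hr', ENNReal.mul_top]
    · exact le_top
    · simpa using hr'
  · unfold onNu
    rw [Measure.restrict_restrict (measurableSet_lt ENNReal.measurable_ofReal measurable_const)]
    refine (lintegral_mono_set (t := Ioc 0 c.toReal) ?_).trans_eq ?_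
    · rintro s ⟨h, h0⟩
      exact ⟨h0, ((ENNReal.ofReal_lt_iff_lt_toReal (le_of_lt h0) hc).1 h).le⟩
    · rw [on_pow_Ioc hr ENNReal.toReal_nonneg, ENNReal.ofReal_toReal hc]

theorem on_rearr {α : ℝ → ℝ≥0∞} (hα : Antitone α) {a b : ℝ} (ha : 0 < a) (hb : 0 < b) :
    ∫⁻ x, ENNReal.ofReal x ^ (a * b - 1) * onR α x ^ a ∂onNu ≤
      ENNReal.ofReal (1 / b) * ∫⁻ s, ENNReal.ofReal s ^ (a - 1) * α s ^ (a * b) ∂onNu := by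
  have hm : MeasurableSet {q : ℝ × ℝ | ENNReal.ofReal q.1 < α q.2} :=
    measurableSet_lt (ENNReal.measurable_ofReal.comp measurable_fst)
      (hα.measurable.comp measurable_snd)
  have hmx : ∀ x : ℝ, MeasurableSet {s | ENNReal.ofReal x < α s} := fun x =>
    measurableSet_lt measurable_const hα.measurable
  have hpm : ∀ r : ℝ, Measurable (fun x : ℝ => ENNReal.ofReal x ^ r) := fun r =>
    ENNReal.measurable_ofReal.pow_const _
  have h1 : ∀ x, onR α x ^ a ≤
      ∫⁻ s in {s | ENNReal.ofReal x < α s}, ENNReal.ofReal a * ENNReal.ofReal s ^ (a - 1) ∂onNu := by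
    intro x
    refine le_of_forall_lt fun c hc => ?_
    obtain ⟨c', hcc', hc'⟩ := exists_between hc
    refine hcc'.trans_le ?_
    have hc1 : c' ^ (1 / a) < onR α x := by
      have := ENNReal.rpow_lt_rpow hc' (z := 1 / a) (by positivity)
      rwa [← ENNReal.rpow_mul, mul_one_div_cancel ha.ne', ENNReal.rpow_one] at this
    set r := (c' ^ (1 / a)).toReal with hr
    have hrc : ENNReal.ofReal r = c' ^ (1 / a) := ENNReal.ofReal_toReal hc1.ne_top
    have hr0 : 0 ≤ r := ENNReal.toReal_nonneg
    rw [← hrc] at hc1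
    have hl := on_lower hα hc1
    have : c' = ∫⁻ s in Ioc 0 r, ENNReal.ofReal a * ENNReal.ofReal s ^ (a - 1) := by
      rw [lintegral_const_mul _ (hpm _), on_pow_Ioc (by linarith) hr0, ← mul_assoc,
        ← ENNReal.ofReal_mul ha.le, sub_add_cancel, mul_one_div_cancel ha.ne', ENNReal.ofReal_one,
        one_mul, hrc, ← ENNReal.rpow_mul, one_div_mul_cancel ha.ne', ENNReal.rpow_one]
    rw [this]
    unfold onNu
    rw [Measure.restrict_restrict (hmx x)]
    refine lintegral_mono_set ?_
    intro s hs
    exact ⟨hl.trans_le (hα hs.2), hs.1⟩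
  set W : Measure ℝ := onNu.withDensity (fun x => ENNReal.ofReal x ^ (a * b - 1)) with hW
  have hab : 0 < a * b := by positivity
  calc ∫⁻ x, ENNReal.ofReal x ^ (a * b - 1) * onR α x ^ a ∂onNu
      = ∫⁻ x, onR α x ^ a ∂W := by
        rw [hW, lintegral_withDensity_eq_lintegral_mul _ (hpm _) ((onR_meas α).pow_const a)]
        rfl
    _ ≤ ∫⁻ x, ∫⁻ s in {s | ENNReal.ofReal x < α s},
          ENNReal.ofReal a * ENNReal.ofReal s ^ (a - 1) ∂onNu ∂W := lintegral_mono h1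
    _ = ∫⁻ s, W {x | ENNReal.ofReal x < α s} * (ENNReal.ofReal a * ENNReal.ofReal s ^ (a - 1)) ∂onNu :=
        on_gen onNu W {q : ℝ × ℝ | ENNReal.ofReal q.1 < α q.2} hm _ ((hpm _).const_mul _)
    _ ≤ ∫⁻ s, ENNReal.ofReal (1 / b) * (ENNReal.ofReal s ^ (a - 1) * α s ^ (a * b)) ∂onNu := by
        refine lintegral_mono fun s => ?_
        have hs : MeasurableSet {x : ℝ | ENNReal.ofReal x < α s} :=
          measurableSet_lt ENNReal.measurable_ofReal measurable_const
        have h2 : W {x | ENNReal.ofReal x < α s} ≤ ENNReal.ofReal (1 / (a * b)) * α s ^ (a * b) := by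
          rw [hW, withDensity_apply _ hs]
          have := on_trunc (r := a * b - 1) (by linarith) (α s)
          rwa [sub_add_cancel] at this
        calc _ ≤ (ENNReal.ofReal (1 / (a * b)) * α s ^ (a * b)) *
              (ENNReal.ofReal a * ENNReal.ofReal s ^ (a - 1)) := by gcongr
          _ = (ENNReal.ofReal (1 / (a * b)) * ENNReal.ofReal a) *
              (ENNReal.ofReal s ^ (a - 1) * α s ^ (a * b)) := by ring
          _ = _ := by
            rw [← ENNReal.ofReal_mul (by positivity)]
            congr 2
            field_simp
    _ = _ := lintegral_const_mul _ ((hpm _).mul (hα.measurable.pow_const _))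

theorem on_rpow_meas (r : ℝ) : Measurable (fun x : ℝ => ENNReal.ofReal x ^ r) :=
  ENNReal.measurable_ofReal.pow_const _

/-- one Schur factor -/
theorem on_schur {θ b₁ b₂ : ℝ} (h1 : b₁ < 1) (h2 : b₂ < 1) (hb : b₁ + b₂ = 1 + θ) {a : ℝ} (ha : 0 < a)
    (F : ℝ → ℝ≥0∞) (hF : Measurable F) :
    ∫⁻ x, ∫⁻ y, (ENNReal.ofReal x ^ b₁ * F x) ^ a *
        (ENNReal.ofReal x ^ (-b₁) * (ENNReal.ofReal y ^ (-b₂) * onM θ x y)) ∂onNu ∂onNu ≤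
      ENNReal.ofReal (1 / (1 - b₂) + 1 / (1 - b₁)) *
        ∫⁻ x, ENNReal.ofReal x ^ (a * b₁ - 1) * F x ^ a ∂onNu := by
  have hM : ∀ x, Measurable (onM θ x) := fun x => (onM_meas θ).comp measurable_prodMk_left
  have hmF : Measurable (fun x => ENNReal.ofReal x ^ (a * b₁ - 1) * F x ^ a) :=
    (on_rpow_meas _).mul (hF.pow_const _)
  rw [← lintegral_const_mul _ hmF]
  refine lintegral_mono_ae ?_
  filter_upwards [onNu_pos] with x hx
  have hX0 : ENNReal.ofReal x ≠ 0 := by simpa using hx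
  have hXt : ENNReal.ofReal x ≠ ∞ := ENNReal.ofReal_ne_top
  have hm : Measurable (fun y => ENNReal.ofReal y ^ (-b₂) * onM θ x y) := (on_rpow_meas _).mul (hM x)
  rw [lintegral_const_mul _ (hm.const_mul _), lintegral_const_mul _ hm]
  calc _ ≤ (ENNReal.ofReal x ^ b₁ * F x) ^ a * (ENNReal.ofReal x ^ (-b₁) *
        (ENNReal.ofReal (1 / (1 - b₂) + 1 / (1 - b₁)) * ENNReal.ofReal x ^ (b₁ - 1))) := by
        gcongr
        exact on_kernel h1 h2 hb hx
    _ = ENNReal.ofReal (1 / (1 - b₂) + 1 / (1 - b₁)) * ((ENNReal.ofReal x ^ (b₁ * a) *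
        ENNReal.ofReal x ^ (-b₁) * ENNReal.ofReal x ^ (b₁ - 1)) * F x ^ a) := by
        rw [ENNReal.mul_rpow_of_nonneg _ _ ha.le, ← ENNReal.rpow_mul]
        ring
    _ = _ := by
        rw [← ENNReal.rpow_add _ _ hX0 hXt, ← ENNReal.rpow_add _ _ hX0 hXt]
        congr 3
        ring

theorem on_holder {θ b₁ b₂ : ℝ} (h1 : b₁ < 1) (h2 : b₂ < 1) (hb : b₁ + b₂ = 1 + θ) (hθ1 : θ < 1)
    {a a' : ℝ}
    (haa : a.HolderConjugate a') (F G : ℝ → ℝ≥0∞) (hF : Measurable F) (hG : Measurable G) :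
    ∫⁻ x, ∫⁻ y, F x * G y * onM θ x y ∂onNu ∂onNu ≤
      ENNReal.ofReal (1 / (1 - b₂) + 1 / (1 - b₁)) *
        (∫⁻ x, ENNReal.ofReal x ^ (a * b₁ - 1) * F x ^ a ∂onNu) ^ (1 / a) *
        (∫⁻ x, ENNReal.ofReal x ^ (a' * b₂ - 1) * G x ^ a' ∂onNu) ^ (1 / a') := by
  have ha : 0 < a := haa.pos
  have ha' : 0 < a' := haa.symm.pos
  set κ : ℝ × ℝ → ℝ≥0∞ := fun q =>
    ENNReal.ofReal q.1 ^ (-b₁) * (ENNReal.ofReal q.2 ^ (-b₂) * onM θ q.1 q.2) with hκ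
  have hκm : Measurable κ := ((on_rpow_meas _).comp measurable_fst).mul
    (((on_rpow_meas _).comp measurable_snd).mul (onM_meas θ))
  set U : ℝ × ℝ → ℝ≥0∞ := fun q => (ENNReal.ofReal q.1 ^ b₁ * F q.1) with hU
  set V : ℝ × ℝ → ℝ≥0∞ := fun q => (ENNReal.ofReal q.2 ^ b₂ * G q.2) with hV
  have hUm : Measurable U := (((on_rpow_meas _).mul hF).comp measurable_fst)
  have hVm : Measurable V := (((on_rpow_meas _).mul hG).comp measurable_snd)
  have hone : 1 / a + 1 / a' = 1 := by simpa using haa.inv_add_inv_eq_one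
  set c := ENNReal.ofReal (1 / (1 - b₂) + 1 / (1 - b₁)) with hc
  have hc0 : c ≠ 0 := by
    have p1 : 0 < 1 - b₂ := by linarith
    have p2 : 0 < 1 - b₁ := by linarith
    rw [hc, ne_eq, ENNReal.ofReal_eq_zero, not_le]; positivity
  have hct : c ≠ ∞ := ENNReal.ofReal_ne_top
  have hfac : ∫⁻ x, ∫⁻ y, F x * G y * onM θ x y ∂onNu ∂onNu =
      ∫⁻ x, ∫⁻ y, ((fun q => U q * κ q ^ (1 / a)) * (fun q => V q * κ q ^ (1 / a'))) (x, y) ∂onNu ∂onNu := by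
    refine lintegral_congr_ae ?_
    filter_upwards [onNu_pos] with x hx
    refine lintegral_congr_ae ?_
    filter_upwards [onNu_pos] with y hy
    have hX0 : ENNReal.ofReal x ≠ 0 := by simpa using hx
    have hXt : ENNReal.ofReal x ≠ ∞ := ENNReal.ofReal_ne_top
    have hY0 : ENNReal.ofReal y ≠ 0 := by simpa using hy
    have hYt : ENNReal.ofReal y ≠ ∞ := ENNReal.ofReal_ne_top
    have e1 : κ (x, y) ^ (1 / a) * κ (x, y) ^ (1 / a') = κ (x, y) := by
      rw [← ENNReal.rpow_add_of_nonneg _ _ (by positivity) (by positivity), hone, ENNReal.rpow_one]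
    calc F x * G y * onM θ x y = (ENNReal.ofReal x ^ b₁ * ENNReal.ofReal x ^ (-b₁)) *
          (ENNReal.ofReal y ^ b₂ * ENNReal.ofReal y ^ (-b₂)) * (F x * G y * onM θ x y) := by
          rw [← ENNReal.rpow_add _ _ hX0 hXt, ← ENNReal.rpow_add _ _ hY0 hYt, add_neg_cancel,
            add_neg_cancel, ENNReal.rpow_zero, ENNReal.rpow_zero]; ring
      _ = U (x, y) * V (x, y) * κ (x, y) := by simp only [hU, hV, hκ]; ring
      _ = U (x, y) * V (x, y) * (κ (x, y) ^ (1 / a) * κ (x, y) ^ (1 / a')) := by rw [e1]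
      _ = _ := by simp only [Pi.mul_apply]; ring
  have hm1 : Measurable (fun q => U q * κ q ^ (1 / a)) := hUm.mul (hκm.pow_const _)
  have hm2 : Measurable (fun q => V q * κ q ^ (1 / a')) := hVm.mul (hκm.pow_const _)
  have hp1 : ∀ q, (U q * κ q ^ (1 / a)) ^ a = U q ^ a * κ q := fun q => by
    rw [ENNReal.mul_rpow_of_nonneg _ _ ha.le, ← ENNReal.rpow_mul, one_div_mul_cancel ha.ne',
      ENNReal.rpow_one]
  have hp2 : ∀ q, (V q * κ q ^ (1 / a')) ^ a' = V q ^ a' * κ q := fun q => by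
    rw [ENNReal.mul_rpow_of_nonneg _ _ ha'.le, ← ENNReal.rpow_mul, one_div_mul_cancel ha'.ne',
      ENNReal.rpow_one]
  rw [hfac, ← lintegral_prod _ (hm1.mul hm2).aemeasurable]
  refine (ENNReal.lintegral_mul_le_Lp_mul_Lq _ haa hm1.aemeasurable hm2.aemeasurable).trans ?_
  simp_rw [hp1, hp2]
  have hs1 : ∫⁻ q, U q ^ a * κ q ∂(onNu.prod onNu) ≤
      c * ∫⁻ x, ENNReal.ofReal x ^ (a * b₁ - 1) * F x ^ a ∂onNu := by
    have hm : Measurable (fun q => U q ^ a * κ q) := (hUm.pow_const _).mul hκm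
    rw [lintegral_prod _ hm.aemeasurable]
    exact on_schur h1 h2 hb ha F hF
  have hs2 : ∫⁻ q, V q ^ a' * κ q ∂(onNu.prod onNu) ≤
      c * ∫⁻ x, ENNReal.ofReal x ^ (a' * b₂ - 1) * G x ^ a' ∂onNu := by
    have hm : Measurable (fun q => V q ^ a' * κ q) := (hVm.pow_const _).mul hκm
    rw [lintegral_prod_symm _ hm.aemeasurable]
    have := on_schur h2 h1 (by linarith : b₂ + b₁ = 1 + θ) ha' G hG
    rw [add_comm (1 / (1 - b₁))] at this
    refine le_trans (le_of_eq ?_) this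
    refine lintegral_congr fun y => lintegral_congr fun x => ?_
    simp only [hV, hκ]
    rw [onM_comm θ y x]; ring
  calc _ ≤ (c * ∫⁻ x, ENNReal.ofReal x ^ (a * b₁ - 1) * F x ^ a ∂onNu) ^ (1 / a) *
        (c * ∫⁻ x, ENNReal.ofReal x ^ (a' * b₂ - 1) * G x ^ a' ∂onNu) ^ (1 / a') := by
        gcongr
    _ = (c ^ (1 / a) * c ^ (1 / a')) *
        (∫⁻ x, ENNReal.ofReal x ^ (a * b₁ - 1) * F x ^ a ∂onNu) ^ (1 / a) *
        (∫⁻ x, ENNReal.ofReal x ^ (a' * b₂ - 1) * G x ^ a' ∂onNu) ^ (1 / a') := by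
        rw [ENNReal.mul_rpow_of_nonneg _ _ (by positivity),
          ENNReal.mul_rpow_of_nonneg _ _ (by positivity)]
        ring
    _ = _ := by
        rw [← ENNReal.rpow_add _ _ hc0 hct, hone, ENNReal.rpow_one]

/-- Lorentz quasinorm in terms of the distribution function -/
noncomputable def onN (α : ℝ → ℝ≥0∞) (b : ℝ) (a : ℝ≥0∞) : ℝ≥0∞ :=
  if a = ∞ then ⨆ s : ℝ≥0, (s : ℝ≥0∞) * α s ^ b
  else (∫⁻ s, ENNReal.ofReal s ^ (a.toReal - 1) * α s ^ (a.toReal * b) ∂onNu) ^ (1 / a.toReal)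

theorem on_weak {α : ℝ → ℝ≥0∞} (hα : Antitone α) {b : ℝ} (hb : 0 < b) {x : ℝ} (hx : 0 < x) :
    onR α x ≤ onN α b ∞ * ENNReal.ofReal x ^ (-b) := by
  have hX0 : ENNReal.ofReal x ≠ 0 := by simpa using hx
  have hXt : ENNReal.ofReal x ≠ ∞ := ENNReal.ofReal_ne_top
  unfold onN
  rw [if_pos rfl, ENNReal.rpow_neg, ← div_eq_mul_inv]
  rw [ENNReal.le_div_iff_mul_le (Or.inl (by simp [hX0, hXt]))
    (Or.inl (ENNReal.rpow_ne_top_of_nonneg hb.le hXt))]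
  have hxb : ENNReal.ofReal x ^ b ≠ 0 := by simp [hX0, hXt]
  rw [← ENNReal.le_div_iff_mul_le (Or.inl hxb) (Or.inl (ENNReal.rpow_ne_top_of_nonneg hb.le hXt))]
  refine le_of_forall_lt fun c hc => ?_
  obtain ⟨c', hcc', hc'⟩ := exists_between hc
  refine hcc'.trans_le ?_
  rw [ENNReal.le_div_iff_mul_le (Or.inl hxb) (Or.inl (ENNReal.rpow_ne_top_of_nonneg hb.le hXt))]
  lift c' to ℝ≥0 using hc'.ne_top
  have h := on_lower hα (r := (c' : ℝ)) (x := x) (by rwa [ENNReal.ofReal_coe_nnreal])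
  refine le_trans ?_ (le_iSup _ c')
  gcongr

theorem on_final_one {θ b₁ b₂ : ℝ} (h1 : b₁ < 1) (h2 : b₂ < 1) (h01 : 0 < b₁) (h02 : 0 < b₂)
    (hb : b₁ + b₂ = 1 + θ) {α β : ℝ → ℝ≥0∞} (hα : Antitone α) (hβ : Antitone β) :
    ∫⁻ x, ∫⁻ y, onR α x * onR β y * onM θ x y ∂onNu ∂onNu ≤
      ENNReal.ofReal (1 / (1 - b₂) + 1 / (1 - b₁)) * ENNReal.ofReal (1 / b₁) *
        onN α b₁ 1 * onN β b₂ ∞ := by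
  have hM : ∀ x, Measurable (onM θ x) := fun x => (onM_meas θ).comp measurable_prodMk_left
  set c := ENNReal.ofReal (1 / (1 - b₂) + 1 / (1 - b₁)) with hc
  set N := onN β b₂ ∞ with hN
  have key := on_rearr hα one_pos h01
  simp only [one_mul, ENNReal.rpow_one] at key
  calc _ ≤ ∫⁻ x, (c * N) * (ENNReal.ofReal x ^ (b₁ - 1) * onR α x) ∂onNu := by
        refine lintegral_mono_ae ?_
        filter_upwards [onNu_pos] with x hx
        have hm : Measurable (fun y => ENNReal.ofReal y ^ (-b₂) * onM θ x y) :=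
          (on_rpow_meas _).mul (hM x)
        calc ∫⁻ y, onR α x * onR β y * onM θ x y ∂onNu
            ≤ ∫⁻ y, (onR α x * N) * (ENNReal.ofReal y ^ (-b₂) * onM θ x y) ∂onNu := by
              refine lintegral_mono_ae ?_
              filter_upwards [onNu_pos] with y hy
              calc _ ≤ onR α x * (N * ENNReal.ofReal y ^ (-b₂)) * onM θ x y := by
                    gcongr; exact on_weak hβ h02 hy
                _ = _ := by ring
          _ = (onR α x * N) * ∫⁻ y, (ENNReal.ofReal y ^ (-b₂) * onM θ x y) ∂onNu :=
              lintegral_const_mul _ hm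
          _ ≤ (onR α x * N) * (c * ENNReal.ofReal x ^ (b₁ - 1)) := by
              gcongr; exact on_kernel h1 h2 hb hx
          _ = _ := by ring
    _ = (c * N) * ∫⁻ x, (ENNReal.ofReal x ^ (b₁ - 1) * onR α x) ∂onNu :=
        lintegral_const_mul _ ((on_rpow_meas _).mul (onR_meas α))
    _ ≤ (c * N) * (ENNReal.ofReal (1 / b₁) * ∫⁻ s, ENNReal.ofReal s ^ (1 - 1 : ℝ) * α s ^ b₁ ∂onNu) := by
        gcongr
    _ = _ := by
        have : onN α b₁ 1 = ∫⁻ s, ENNReal.ofReal s ^ (1 - 1 : ℝ) * α s ^ b₁ ∂onNu := by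
          simp [onN]
        rw [this]; ring

theorem on_final {θ b₁ b₂ : ℝ} (hθ1 : θ < 1) (h1 : b₁ < 1) (h2 : b₂ < 1) (h01 : 0 < b₁) (h02 : 0 < b₂)
    (hb : b₁ + b₂ = 1 + θ) (a a' : ℝ≥0∞) (ha : 1 ≤ a) (haa : 1 / a + 1 / a' = 1) :
    ∃ c : ℝ≥0∞, c ≠ ∞ ∧ ∀ α β : ℝ → ℝ≥0∞, Antitone α → Antitone β →
    ∫⁻ x, ∫⁻ y, onR α x * onR β y * onM θ x y ∂onNu ∂onNu ≤ c * onN α b₁ a * onN β b₂ a' := by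
  simp only [one_div] at haa
  rcases eq_or_ne a 1 with rfl | ha1
  · have ha' : a' = ∞ := by
      have : (1:ℝ≥0∞) + a'⁻¹ = 1 + 0 := by simpa using haa
      have := (ENNReal.add_right_inj ENNReal.one_ne_top).1 this
      simpa using this
    subst ha'
    exact ⟨_, ENNReal.mul_ne_top ENNReal.ofReal_ne_top ENNReal.ofReal_ne_top, fun α β hα hβ =>
      on_final_one h1 h2 h01 h02 hb hα hβ⟩
  rcases eq_or_ne a ∞ with rfl | hat
  · have ha' : a' = 1 := by simpa using haa
    subst ha'
    refine ⟨_, ENNReal.mul_ne_top ENNReal.ofReal_ne_top ENNReal.ofReal_ne_top, fun α β hα hβ =>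
      (le_of_eq ?_).trans ((on_final_one h2 h1 h02 h01 (by linarith : b₂ + b₁ = 1 + θ) hβ hα).trans_eq
        (mul_right_comm _ _ _))⟩
    rw [lintegral_lintegral_swap]
    · refine lintegral_congr fun y => lintegral_congr fun x => ?_
      rw [onM_comm θ y x]; ring
    · exact ((((onR_meas α).comp measurable_fst).mul ((onR_meas β).comp measurable_snd)).mul
        (onM_meas θ)).aemeasurable
  have ha1' : 1 < a := lt_of_le_of_ne ha ha1.symm
  have ha't : a' ≠ ∞ := by
    rintro rfl
    simp at haa
    exact ha1 haa
  have ha'0 : a' ≠ 0 := by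
    rintro rfl
    simp at haa
  have hH : a.toReal.HolderConjugate a'.toReal := by
    rw [Real.holderConjugate_iff]
    refine ⟨?_, ?_⟩
    · have := (ENNReal.toReal_lt_toReal ENNReal.one_ne_top hat).2 ha1'
      simpa using this
    · have := congrArg ENNReal.toReal haa
      rw [ENNReal.toReal_add (by simp; exact (one_pos.trans ha1').ne') (by simpa using ha'0)] at this
      simpa using this
  have ra := hH.pos
  have ra' := hH.symm.pos
  refine ⟨ENNReal.ofReal (1 / (1 - b₂) + 1 / (1 - b₁)) * ENNReal.ofReal (1 / b₁) ^ (1 / a.toReal) *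
    ENNReal.ofReal (1 / b₂) ^ (1 / a'.toReal), ?_, fun α β hα hβ => ?_⟩
  · refine ENNReal.mul_ne_top (ENNReal.mul_ne_top ENNReal.ofReal_ne_top ?_) ?_
    · exact ENNReal.rpow_ne_top_of_nonneg (by positivity) ENNReal.ofReal_ne_top
    · exact ENNReal.rpow_ne_top_of_nonneg (by positivity) ENNReal.ofReal_ne_top
  refine (on_holder h1 h2 hb hθ1 hH _ _ (onR_meas α) (onR_meas β)).trans ?_
  calc _ ≤ ENNReal.ofReal (1 / (1 - b₂) + 1 / (1 - b₁)) *
        (ENNReal.ofReal (1 / b₁) * ∫⁻ s, ENNReal.ofReal s ^ (a.toReal - 1) * α s ^ (a.toReal * b₁) ∂onNu)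
          ^ (1 / a.toReal) *
        (ENNReal.ofReal (1 / b₂) * ∫⁻ s, ENNReal.ofReal s ^ (a'.toReal - 1) * β s ^ (a'.toReal * b₂) ∂onNu)
          ^ (1 / a'.toReal) := by
        gcongr
        · exact on_rearr hα ra h01
        · exact on_rearr hβ ra' h02
    _ = _ := by
        rw [ENNReal.mul_rpow_of_nonneg _ _ (by positivity),
          ENNReal.mul_rpow_of_nonneg _ _ (by positivity)]
        unfold onN
        rw [if_neg hat, if_neg ha't]
        ring

theorem on_norm_eq {α : Type*} [MeasurableSpace α] (μ : Measure α) (f : α → ℝ≥0∞) {p : ℝ} (hp : 0 < p)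
    (a : ℝ≥0∞) :
    lorentzNorm μ f (ENNReal.ofReal p) a = onN (fun s => μ {x | ENNReal.ofReal s < f x}) (1 / p) a := by
  unfold lorentzNorm onN
  rw [if_neg ENNReal.ofReal_ne_top, ENNReal.toReal_ofReal hp.le]
  simp only [ENNReal.ofReal_coe_nnreal, mul_one_div]
  rfl

theorem on_reduce {E : Type*} [NormedAddCommGroup E] [NormedSpace ℝ E] [FiniteDimensional ℝ E]
    [MeasurableSpace E] [BorelSpace E] [Nontrivial E] (μ : Measure E) [μ.IsAddHaarMeasure]
    (d : ℕ) (hdim : Module.finrank ℝ E = d)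
    (lam : ℝ) (hlam0 : 0 < lam) (hlamd : lam < d) :
    ∃ C : ℝ, 0 < C ∧ ∀ F G : E → ℝ≥0∞, Measurable F → Measurable G →
      ∫⁻ x, ∫⁻ y, F x * G y * ENNReal.ofReal (‖x - y‖ ^ (-lam)) ∂μ ∂μ ≤
        ENNReal.ofReal C * ∫⁻ x, ∫⁻ y, onR (fun s => μ {x | ENNReal.ofReal s < F x}) x *
          onR (fun s => μ {x | ENNReal.ofReal s < G x}) y * onM (1 - lam / d) x y ∂onNu ∂onNu := by
  obtain ⟨C, hC, hpot⟩ := on_potential μ d hdim lam hlam0 hlamd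
  have hd0 : (0:ℝ) < d := hlam0.trans hlamd
  have hθ : 0 < 1 - lam / d := by rw [sub_pos, div_lt_one hd0]; exact hlamd
  have hθ1 : 1 - lam / d < 1 := by have : 0 < lam / d := by positivity
                                   linarith
  set θ := 1 - lam / d with hθdef
  refine ⟨C, hC, fun F G hF hG => ?_⟩
  set α : ℝ → ℝ≥0∞ := fun s => μ {x | ENNReal.ofReal s < F x} with hα
  set β : ℝ → ℝ≥0∞ := fun s => μ {x | ENNReal.ofReal s < G x} with hβ
  have hαa : Antitone α := fun _ _ h =>
    measure_mono fun _ hx => (ENNReal.ofReal_le_ofReal h).trans_lt hx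
  have hβa : Antitone β := fun _ _ h =>
    measure_mono fun _ hx => (ENNReal.ofReal_le_ofReal h).trans_lt hx
  have hKm : Measurable (Function.uncurry fun x y : E => ENNReal.ofReal (‖x - y‖ ^ (-lam))) := by
    unfold Function.uncurry
    fun_prop
  have hSF : ∀ H : E → ℝ≥0∞, Measurable H → MeasurableSet {q : ℝ × E | ENNReal.ofReal q.1 < H q.2} :=
    fun H hH => measurableSet_lt (ENNReal.measurable_ofReal.comp measurable_fst)
      (hH.comp measurable_snd)
  have hSα : ∀ α : ℝ → ℝ≥0∞, Antitone α → MeasurableSet {q : ℝ × ℝ | ENNReal.ofReal q.2 < α q.1} :=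
    fun α hα => measurableSet_lt (ENNReal.measurable_ofReal.comp measurable_snd)
      (hα.measurable.comp measurable_fst)
  have step1 := on_gen2 μ μ onNu onNu _ (hSF F hF) _ (hSF G hG) _ hKm
  have step2 := on_gen2 onNu onNu onNu onNu _ (hSα α hαa) _ (hSα β hβa) _ (onM_meas θ)
  have e1 : ∀ H : E → ℝ≥0∞, ∀ x, onNu {s | (s, x) ∈ {q : ℝ × E | ENNReal.ofReal q.1 < H q.2}} = H x :=
    fun H x => on_vol (H x)
  simp only [e1] at step1
  have hinner : ∀ A B : Set E, MeasurableSet A → MeasurableSet B →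
      ∫⁻ x in A, ∫⁻ y in B, ENNReal.ofReal (‖x - y‖ ^ (-lam)) ∂μ ∂μ ≤
        ENNReal.ofReal C * (μ A * μ B ^ θ) := by
    intro A B hA hB
    calc _ ≤ ∫⁻ x in A, ENNReal.ofReal C * μ B ^ θ ∂μ := lintegral_mono fun x => hpot x B hB
      _ = _ := by rw [setLIntegral_const]; ring
  have hswap : ∀ A B : Set E,
      ∫⁻ x in A, ∫⁻ y in B, ENNReal.ofReal (‖x - y‖ ^ (-lam)) ∂μ ∂μ =
      ∫⁻ x in B, ∫⁻ y in A, ENNReal.ofReal (‖x - y‖ ^ (-lam)) ∂μ ∂μ := by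
    intro A B
    rw [lintegral_lintegral_swap hKm.aemeasurable]
    simp_rw [norm_sub_rev]
  have hlev : ∀ H : E → ℝ≥0∞, Measurable H → ∀ s : ℝ, MeasurableSet {x | ENNReal.ofReal s < H x} :=
    fun H hH s => measurableSet_lt measurable_const hH
  rw [← step1]
  have step2' : ∫⁻ x, ∫⁻ y, onR α x * onR β y * onM θ x y ∂onNu ∂onNu = _ := step2.symm
  rw [step2', ← lintegral_const_mul' _ _ ENNReal.ofReal_ne_top]
  refine lintegral_mono fun s => ?_
  rw [← lintegral_const_mul' _ _ ENNReal.ofReal_ne_top]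
  refine lintegral_mono fun t => ?_
  refine le_trans ?_ (mul_le_mul_right (on_Phi hθ hθ1 (α s) (β t)) _)
  have i1 := hinner _ _ (hlev F hF s) (hlev G hG t)
  have i2 := hinner _ _ (hlev G hG t) (hlev F hF s)
  rw [hswap] at i2
  rcases min_choice (α s * β t ^ θ) (β t * α s ^ θ) with h | h
  · rw [h]; exact i1
  · rw [h]; exact i2

/-- **O'Neil.** Let `d ≥ 1`, `0 < λ < d`, `1 < p₁, p₂ < ∞`, `1 ≤ a ≤ ∞` with
`1/p₁ + 1/p₂ + λ/d = 2`. Then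
`|∬ f(x) g(y) |x-y|^{-λ} dx dy| ≲ ‖f‖_{L^{p₁,a}} ‖g‖_{L^{p₂,a'}}`, `a'` the conjugate of `a`. -/
theorem statement6 (d : ℕ) (hd : 1 ≤ d) (lam : ℝ) (hlam0 : 0 < lam) (hlamd : lam < d)
    (p₁ p₂ : ℝ) (hp₁ : 1 < p₁) (hp₂ : 1 < p₂)
    (a a' : ℝ≥0∞) (ha : 1 ≤ a) (ha' : 1 / a + 1 / a' = 1)
    (hscal : 1 / p₁ + 1 / p₂ + lam / d = 2) :
    ∃ C : ℝ, 0 < C ∧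
      ∀ f g : EuclideanSpace ℝ (Fin d) → ℂ,
        ∫⁻ x, ∫⁻ y, (‖f x‖₊ : ℝ≥0∞) * (‖g y‖₊ : ℝ≥0∞) * ENNReal.ofReal (‖x - y‖ ^ (-lam)) ≤
          ENNReal.ofReal C *
            lorentzNorm volume (fun x => (‖f x‖₊ : ℝ≥0∞)) (ENNReal.ofReal p₁) a *
            lorentzNorm volume (fun y => (‖g y‖₊ : ℝ≥0∞)) (ENNReal.ofReal p₂) a' := by
  have hd0 : (0:ℝ) < d := hlam0.trans hlamd
  have : Nonempty (Fin d) := ⟨⟨0, hd⟩⟩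
  obtain ⟨C, hC, hred⟩ := on_reduce (volume : Measure (EuclideanSpace ℝ (Fin d))) d
    (by simp) lam hlam0 hlamd
  have q1 : 1 / p₁ < 1 := by rw [div_lt_one (by linarith)]; exact hp₁
  have q2 : 1 / p₂ < 1 := by rw [div_lt_one (by linarith)]; exact hp₂
  have q3 : 0 < lam / d := by positivity
  obtain ⟨c, hc, hfin⟩ := on_final (θ := 1 - lam / d) (b₁ := 1 / p₁) (b₂ := 1 / p₂) (by linarith) q1 q2
    (by positivity) (by positivity) (by linarith) a a' ha ha'
  refine ⟨C * (c.toReal + 1), by positivity, fun f g => ?_⟩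
  obtain ⟨F, hF, hfF, hFd⟩ := on_majorant volume (fun x => (‖f x‖₊ : ℝ≥0∞))
  obtain ⟨G, hG, hgG, hGd⟩ := on_majorant volume (fun x => (‖g x‖₊ : ℝ≥0∞))
  rw [on_norm_eq _ _ (by linarith), on_norm_eq _ _ (by linarith)]
  have anti : ∀ H : EuclideanSpace ℝ (Fin d) → ℝ≥0∞,
      Antitone (fun s : ℝ => volume {x | ENNReal.ofReal s < H x}) := fun H _ _ h =>
    measure_mono fun _ hx => (ENNReal.ofReal_le_ofReal h).trans_lt hx
  have h1 := hred F G hF hG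
  have h2 := hfin _ _ (anti F) (anti G)
  simp only [hFd, hGd] at h1 h2
  calc _ ≤ ∫⁻ x, ∫⁻ y, F x * G y * ENNReal.ofReal (‖x - y‖ ^ (-lam)) := by
        refine lintegral_mono fun x => lintegral_mono fun y => ?_
        have := hfF x
        have := hgG y
        gcongr
    _ ≤ _ := h1
    _ ≤ ENNReal.ofReal C * (c * onN (fun s => volume {x | ENNReal.ofReal s < (‖f x‖₊ : ℝ≥0∞)}) (1 / p₁) a *
          onN (fun s => volume {x | ENNReal.ofReal s < (‖g x‖₊ : ℝ≥0∞)}) (1 / p₂) a') := by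
        gcongr
    _ ≤ ENNReal.ofReal C * (ENNReal.ofReal (c.toReal + 1) *
          onN (fun s => volume {x | ENNReal.ofReal s < (‖f x‖₊ : ℝ≥0∞)}) (1 / p₁) a *
          onN (fun s => volume {x | ENNReal.ofReal s < (‖g x‖₊ : ℝ≥0∞)}) (1 / p₂) a') := by
        gcongr
        rw [← ENNReal.toReal_le_toReal hc ENNReal.ofReal_ne_top,
          ENNReal.toReal_ofReal (by positivity)]
        linarith
    _ = _ := by
        rw [ENNReal.ofReal_mul hC.le]; ring
end
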